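/- arXiv:2005.08166 — 2 statements merged into one kernel-verified Lean document; each statement's English description precedes it below -/
import Mathlib

section
/- Let 𝔤 ⊆ co(1,n+1) with 𝔤 ⊄ so(1,n+1) be a Berger algebra that is weakly irreducible and not irreducible. Then 𝔤 is conjugate, by an orthogonal transformation of ℝ^{1,n+1}, to one of the following subalgebras of co(1,n+1)_{ℝp}: ℝ·id ⊕ 𝔤^{1,𝔥}, ℝ·id ⊕ 𝔤^{2,𝔥}, ℝ·id ⊕ 𝔤^{3,𝔥,φ}, 𝔤^{α,θ,1,𝔥}, 𝔤^{θ,2,𝔥}, or 𝔤^{θ,3,𝔥,φ}, where 𝔥 ⊆ so(n) is a weak Berger algebra (equivalently, by Leistner's theorem used by the paper, the holonomy algebra of a Riemannian manifold) and the parameters α, θ, φ are as in the definitions of these algebras. -/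
open Module

noncomputable section

namespace Weyl

variable {V : Type*} [AddCommGroup V] [Module ℝ V]

/-- The endomorphism `X ∧ Y : Z ↦ B(X,Z)•Y − B(Y,Z)•X`. -/
def wedge (B : LinearMap.BilinForm ℝ V) (X Y : V) : Module.End ℝ V where
  toFun Z := B X Z • Y - B Y Z • X
  map_add' z z' := by simp only [map_add, add_smul]; abel
  map_smul' c z := by simp only [map_smul, smul_eq_mul, RingHom.id_apply, mul_smul, smul_sub]

/-- The Lie algebra `so(B)` of endomorphisms skew-symmetric with respect to `B`. -/
def soSet (B : LinearMap.BilinForm ℝ V) : Set (Module.End ℝ V) :=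
  {A | ∀ x y, B (A x) y + B x (A y) = 0}

/-- The conformal Lie algebra `co(B) = ℝ·id ⊕ so(B)`. -/
def coSet (B : LinearMap.BilinForm ℝ V) : Set (Module.End ℝ V) :=
  {F | ∃ c : ℝ, ∃ S ∈ soSet B, F = c • (1 : Module.End ℝ V) + S}

/-- The first prolongation `g^{(1)}` of a set of endomorphisms:
linear maps `φ : V → g` with `φ(X)Y = φ(Y)X`. -/
def firstProlong (g : Set (Module.End ℝ V)) : Set (V →ₗ[ℝ] Module.End ℝ V) :=
  {φ | (∀ x, φ x ∈ g) ∧ ∀ x y, φ x y = φ y x}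

/-- `R` is an algebraic curvature tensor of type `g` (a linear map on `Λ²V`,
encoded as an antisymmetric bilinear map, with values in `g`, satisfying the
Bianchi identity). -/
def IsCurv (g : Set (Module.End ℝ V)) (R : V →ₗ[ℝ] V →ₗ[ℝ] Module.End ℝ V) : Prop :=
  (∀ x y, R x y = - R y x) ∧ (∀ x y, R x y ∈ g) ∧
    ∀ x y z, R x y z + R y z x + R z x y = 0

/-- `L(ℛ(g))`: the span of all values of algebraic curvature tensors of type `g`. -/
def curvSpan (g : Set (Module.End ℝ V)) : Submodule ℝ (Module.End ℝ V) :=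
  Submodule.span ℝ {F | ∃ R, IsCurv g R ∧ ∃ x y, F = R x y}

/-- `g` is a Berger algebra: `L(ℛ(g)) = g`. -/
def IsBerger (g : Set (Module.End ℝ V)) : Prop :=
  (curvSpan g : Set (Module.End ℝ V)) = g

/-- `g` is (the underlying set of) a Lie subalgebra of `gl(V)`. -/
def IsLieSub (g : Set (Module.End ℝ V)) : Prop :=
  (0 : Module.End ℝ V) ∈ g ∧ (∀ F ∈ g, ∀ F' ∈ g, F + F' ∈ g) ∧
    (∀ (c : ℝ), ∀ F ∈ g, c • F ∈ g) ∧ ∀ F ∈ g, ∀ F' ∈ g, F * F' - F' * F ∈ g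

/-- The subspace `W` is invariant under every element of `g`. -/
def Invariant (g : Set (Module.End ℝ V)) (W : Submodule ℝ V) : Prop :=
  ∀ F ∈ g, ∀ x ∈ W, F x ∈ W

/-- The restriction of `B` to `W` is nondegenerate. -/
def IsNondegOn (B : LinearMap.BilinForm ℝ V) (W : Submodule ℝ V) : Prop :=
  ∀ x ∈ W, (∀ y ∈ W, B x y = 0) → x = 0

/-- Weak irreducibility: no proper nonzero invariant nondegenerate subspace. -/
def WeaklyIrred (B : LinearMap.BilinForm ℝ V) (g : Set (Module.End ℝ V)) : Prop :=
  ∀ W : Submodule ℝ V, Invariant g W → IsNondegOn B W → W = ⊥ ∨ W = ⊤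

/-- Irreducibility: no proper nonzero invariant subspace. -/
def Irred (g : Set (Module.End ℝ V)) : Prop :=
  ∀ W : Submodule ℝ V, Invariant g W → W = ⊥ ∨ W = ⊤

/-- The Euclidean dot product on `Fin n → ℝ`. -/
def dotE (n : ℕ) : LinearMap.BilinForm ℝ (Fin n → ℝ) :=
  LinearMap.mk₂ ℝ (fun x y => ∑ i, x i * y i)
    (fun x x' y => by simp [add_mul, Finset.sum_add_distrib])
    (fun c x y => by simp [Finset.mul_sum, mul_assoc])
    (fun x y y' => by simp [mul_add, Finset.sum_add_distrib])
    (fun c x y => by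
      simp only [Pi.smul_apply, smul_eq_mul, Finset.mul_sum]
      exact Finset.sum_congr rfl fun i _ => by ring)

/-- Minkowski space `ℝ^{1,n+1}` in Witt coordinates: the vector `(v, x, u)`
represents `v·p + x + u·q` with respect to a Witt basis `p, e₁, …, eₙ, q`. -/
abbrev Mink (n : ℕ) := ℝ × (Fin n → ℝ) × ℝ

/-- The Minkowski metric in Witt coordinates: `p, q` are isotropic, `(p,q) = 1`,
and the form is the Euclidean one on the `ℝⁿ`-part orthogonal to `p` and `q`. -/
def minkB (n : ℕ) : LinearMap.BilinForm ℝ (Mink n) :=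
  LinearMap.mk₂ ℝ (fun X Y => X.1 * Y.2.2 + X.2.2 * Y.1 + dotE n X.2.1 Y.2.1)
    (fun X X' Y => by
      simp only [Prod.fst_add, Prod.snd_add, Pi.add_apply, map_add,
        LinearMap.add_apply]
      ring)
    (fun c X Y => by
      simp only [Prod.smul_fst, Prod.smul_snd, smul_eq_mul, map_smul,
        LinearMap.smul_apply]
      ring)
    (fun X Y Y' => by
      simp only [Prod.fst_add, Prod.snd_add, Pi.add_apply, map_add,
        LinearMap.add_apply]
      ring)
    (fun c X Y => by
      simp only [Prod.smul_fst, Prod.smul_snd, smul_eq_mul, map_smul,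
        LinearMap.smul_apply]
      ring)

/-- The Witt basis vector `p`. -/
def pvec (n : ℕ) : Mink n := (1, 0, 0)

/-- The Witt basis vector `q`. -/
def qvec (n : ℕ) : Mink n := (0, 0, 1)

/-- The embedding of `ℝⁿ` into Minkowski space. -/
def emb {n : ℕ} (x : Fin n → ℝ) : Mink n := (0, x, 0)

/-- The element `(b, a, A, X) = b·id + (a, A, X)` of `co(1,n+1)_{ℝp}`:
it maps `p ↦ (a+b)·p`, `U ↦ (X,U)·p + A U + b·U` for `U ∈ ℝⁿ`, and
`q ↦ −X + (b−a)·q`. -/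
def coElem {n : ℕ} (b a : ℝ) (A : Module.End ℝ (Fin n → ℝ)) (X : Fin n → ℝ) :
    Module.End ℝ (Mink n) where
  toFun w := ((b + a) * w.1 + dotE n X w.2.1,
              b • w.2.1 + A w.2.1 - w.2.2 • X,
              (b - a) * w.2.2)
  map_add' w w' := by
    simp only [Prod.fst_add, Prod.snd_add, map_add, Prod.mk_add_mk, add_smul]
    refine Prod.ext (by ring) (Prod.ext ?_ (by ring))
    simp only [smul_add]
    abel
  map_smul' c w := by
    simp only [Prod.smul_fst, Prod.smul_snd, smul_eq_mul, map_smul,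
      RingHom.id_apply, Prod.smul_mk]
    refine Prod.ext (by simp; ring) (Prod.ext ?_ (by simp; ring))
    simp only [smul_smul, smul_sub, LinearMap.map_smul]
    rw [mul_comm]
    module

/-- The Lie algebra `so(n)` of skew-symmetric endomorphisms of Euclidean `ℝⁿ`. -/
def soE (n : ℕ) : Set (Module.End ℝ (Fin n → ℝ)) := soSet (dotE n)

/-- The subalgebra `co(1,n+1)_{ℝp}` of `co(1,n+1)` preserving the isotropic line `ℝp`,
whose elements are written `(b, a, A, X)`. -/
def coRp (n : ℕ) : Set (Module.End ℝ (Mink n)) :=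
  {F | ∃ b a : ℝ, ∃ A ∈ soE n, ∃ X : Fin n → ℝ, F = coElem b a A X}

/-- `P` is a weak curvature tensor of type `h ⊆ so(n)`. -/
def IsWeakCurv (n : ℕ) (h : Set (Module.End ℝ (Fin n → ℝ)))
    (P : (Fin n → ℝ) →ₗ[ℝ] Module.End ℝ (Fin n → ℝ)) : Prop :=
  (∀ x, P x ∈ h) ∧
    ∀ x y z, dotE n (P x y) z + dotE n (P y z) x + dotE n (P z x) y = 0

/-- The span of all values of weak curvature tensors of type `h`. -/
def weakSpan (n : ℕ) (h : Set (Module.End ℝ (Fin n → ℝ))) :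
    Submodule ℝ (Module.End ℝ (Fin n → ℝ)) :=
  Submodule.span ℝ {A | ∃ P, IsWeakCurv n h P ∧ ∃ U, A = P U}

/-- `h ⊆ so(n)` is a weak Berger algebra (equivalently, by Leistner's theorem,
the holonomy algebra of a Riemannian manifold). -/
def IsWeakBerger (n : ℕ) (h : Set (Module.End ℝ (Fin n → ℝ))) : Prop :=
  (weakSpan n h : Set (Module.End ℝ (Fin n → ℝ))) = h

/-- `φ` is an orthogonal transformation of Minkowski space. -/
def OrthEquiv (n : ℕ) (φ : Mink n ≃ₗ[ℝ] Mink n) : Prop :=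
  ∀ x y, minkB n (φ x) (φ y) = minkB n x y

/-- Conjugation of a set of endomorphisms by a linear automorphism. -/
def conjSet {n : ℕ} (φ : Mink n ≃ₗ[ℝ] Mink n) (s : Set (Module.End ℝ (Mink n))) :
    Set (Module.End ℝ (Mink n)) :=
  (fun F => (φ.conj : Module.End ℝ (Mink n) ≃ₗ[ℝ] Module.End ℝ (Mink n)) F) '' s

/-- The linear map `θ` vanishes on the commutant `[h, h]`. -/
def VanishOnComm {n : ℕ} (h : Set (Module.End ℝ (Fin n → ℝ)))
    (θ : Module.End ℝ (Fin n → ℝ) →ₗ[ℝ] ℝ) : Prop :=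
  ∀ A ∈ h, ∀ B ∈ h, θ (A * B - B * A) = 0

/-- The linear map `θ` is nonzero on `h`. -/
def NonzeroOn {n : ℕ} (h : Set (Module.End ℝ (Fin n → ℝ)))
    (θ : Module.End ℝ (Fin n → ℝ) →ₗ[ℝ] ℝ) : Prop :=
  ∃ A ∈ h, θ A ≠ 0

/-- `ℝ·id ⊕ 𝔤^{1,𝔥}`. -/
def G1 (n : ℕ) (h : Set (Module.End ℝ (Fin n → ℝ))) : Set (Module.End ℝ (Mink n)) :=
  {F | ∃ b a : ℝ, ∃ A ∈ h, ∃ X : Fin n → ℝ, F = coElem b a A X}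

/-- `ℝ·id ⊕ 𝔤^{2,𝔥}`. -/
def G2 (n : ℕ) (h : Set (Module.End ℝ (Fin n → ℝ))) : Set (Module.End ℝ (Mink n)) :=
  {F | ∃ b : ℝ, ∃ A ∈ h, ∃ X : Fin n → ℝ, F = coElem b 0 A X}

/-- `ℝ·id ⊕ 𝔤^{3,𝔥,φ}`. -/
def G3 (n : ℕ) (h : Set (Module.End ℝ (Fin n → ℝ)))
    (φ : Module.End ℝ (Fin n → ℝ) →ₗ[ℝ] ℝ) : Set (Module.End ℝ (Mink n)) :=
  {F | ∃ b : ℝ, ∃ A ∈ h, ∃ X : Fin n → ℝ, F = coElem b (φ A) A X}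

/-- `𝔤^{α,θ,1,𝔥}`. -/
def G4 (n : ℕ) (h : Set (Module.End ℝ (Fin n → ℝ))) (α : ℝ)
    (θ : Module.End ℝ (Fin n → ℝ) →ₗ[ℝ] ℝ) : Set (Module.End ℝ (Mink n)) :=
  {F | ∃ a : ℝ, ∃ A ∈ h, ∃ X : Fin n → ℝ, F = coElem (α * a + θ A) a A X}

/-- `𝔤^{θ,2,𝔥}`. -/
def G5 (n : ℕ) (h : Set (Module.End ℝ (Fin n → ℝ)))
    (θ : Module.End ℝ (Fin n → ℝ) →ₗ[ℝ] ℝ) : Set (Module.End ℝ (Mink n)) :=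
  {F | ∃ A ∈ h, ∃ X : Fin n → ℝ, F = coElem (θ A) 0 A X}

/-- `𝔤^{θ,3,𝔥,φ}`. -/
def G6 (n : ℕ) (h : Set (Module.End ℝ (Fin n → ℝ)))
    (θ φ : Module.End ℝ (Fin n → ℝ) →ₗ[ℝ] ℝ) : Set (Module.End ℝ (Mink n)) :=
  {F | ∃ A ∈ h, ∃ X : Fin n → ℝ, F = coElem (θ A) (φ A) A X}

/-!
Weak irreducibility without irreducibility yields a nonzero invariant totally isotropic subspace,
so after an orthogonal change of basis `𝔤` fixes the line `ℝp`. Evaluating the Bianchi identity on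
Witt basis vectors shows that the `so(n)`-components of the curvature tensors of type `𝔤` are built
from elements of `𝒫(𝔥)`, where `𝔥` is the `so(n)`-projection of `𝔤`; hence `𝔥` is weak Berger.

The crux is that `𝔤` contains every translation `(0, 0, 0, X)`. Let `N` be the space of those `X`
with `(0, 0, 0, X) ∈ 𝔤`. If some element of `𝔤` has `a ≠ 0`, then so does an element `z` that is
central modulo translations. Bracketing with `z` produces `Y` such that every element of `𝔤` has
`X ∈ a·Y + A·Y + N`; the vectors `U - (Y,U)·p` with `U ∈ N^⊥` then span an invariant nondegenerate
subspace, which must vanish. If `a = 0` on `𝔤`, take a curvature tensor `R` whose scalar part is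
nonzero: since the first prolongation of `so(n)` vanishes, either the values `R(p, U)` are
translations filling `ℝⁿ`, or `R(p, q)` is a nonzero translation by some `v` and, by the pair
symmetry of the `so(n)`-component, the values `R(U, v)` with `U ∈ N^⊥` are translations that force
`N^⊥ = 0`.

Once all translations are present, `𝔤` is determined by its projection to `ℝ ⊕ ℝ ⊕ 𝔥`, and the six
algebras arise according to whether `id ∈ 𝔤` and whether `b` and `a` are functions of `A`.
-/

section SkewAndConformal

variable {B : LinearMap.BilinForm ℝ V}

theorem apply_left_of_mem_soSet {A : Module.End ℝ V} (hA : A ∈ soSet B) (x y : V) :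
    B (A x) y = -B x (A y) :=
  eq_neg_of_add_eq_zero_left (hA x y)

theorem apply_swap_of_mem_soSet (hB : B.IsSymm) {A : Module.End ℝ V} (hA : A ∈ soSet B)
    (x y : V) : B (A x) y = -B (A y) x := by
  rw [apply_left_of_mem_soSet hA, hB.eq]

theorem apply_self_of_mem_soSet (hB : B.IsSymm) {A : Module.End ℝ V} (hA : A ∈ soSet B)
    (x : V) : B (A x) x = 0 :=
  self_eq_neg.1 (apply_swap_of_mem_soSet hB hA x x)

theorem exists_conformal_factor {F : Module.End ℝ V} (hF : F ∈ coSet B) :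
    ∃ c : ℝ, ∀ x y, B (F x) y + B x (F y) = 2 * c * B x y := by
  obtain ⟨c, S, hS, rfl⟩ := hF
  refine ⟨c, fun x y => ?_⟩
  simp only [LinearMap.add_apply, LinearMap.smul_apply, Module.End.one_apply, map_add, map_smul,
    smul_eq_mul, apply_left_of_mem_soSet hS x y]
  ring

theorem firstProlong_soSet (hB : B.IsSymm) (hsep : B.SeparatingLeft) :
    firstProlong (soSet B) = {0} := by
  refine Set.eq_singleton_iff_unique_mem.2 ⟨⟨fun x y z => by simp, fun _ _ => rfl⟩, ?_⟩
  rintro φ ⟨hφ, hsymm⟩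
  refine LinearMap.ext₂ fun x y => hsep _ fun z => ?_
  have hskew := fun x y z => apply_swap_of_mem_soSet hB (hφ x) y z
  have hxyz := hskew x y z
  have hyzx := hskew y z x
  have hzxy := hskew z x y
  rw [hsymm y z, hsymm y x] at hyzx
  rw [hsymm z x] at hzxy
  linarith

theorem cyclic_skew_eq_zero (hB : B.IsSymm) {A : V → Module.End ℝ V} (hA : ∀ x, A x ∈ soSet B)
    (b : V → ℝ) {x y z : V}
    (h : B (b y • x + A y x - (b x • y + A x y)) z +
      B (b z • y + A z y - (b y • z + A y z)) x +
      B (b x • z + A x z - (b z • x + A z x)) y = 0) :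
    B (A x y) z + B (A y z) x + B (A z x) y = 0 := by
  have hskew := fun x y z => apply_swap_of_mem_soSet hB (hA x) y z
  simp only [map_add, map_sub, map_smul, LinearMap.add_apply, LinearMap.sub_apply,
    LinearMap.smul_apply, smul_eq_mul, hB.eq y x, hB.eq z x, hB.eq z y, hskew x z y,
    hskew y x z, hskew z y x] at h
  linarith

theorem cyclic_of_conformal_bianchi (hB : B.IsSymm) {A : V → V → Module.End ℝ V} {ω : V → V → ℝ}
    (hA : ∀ x y, A x y ∈ soSet B) (hAneg : ∀ x y, A x y = -A y x) (hωneg : ∀ x y, ω x y = -ω y x)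
    (h : ∀ x y z, ω x y • z + A x y z + (ω y z • x + A y z x) + (ω z x • y + A z x y) = 0)
    (w x y z : V) :
    B (A x w y) z + B (A y w z) x + B (A z w x) y =
      B w x * ω y z + B w y * ω z x + B w z * ω x y := by
  have hskew := fun x y z w => apply_swap_of_mem_soSet hB (hA x y) z w
  have hbianchi := fun x y z w => congrArg (fun v => B v w) (h x y z)
  simp only [map_add, map_smul, LinearMap.add_apply, LinearMap.smul_apply, smul_eq_mul,
    map_zero, LinearMap.zero_apply] at hbianchi
  have hflip : ∀ x y z, B (A w x y) z = -B (A x w y) z := fun x y z => by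
    rw [hAneg, LinearMap.neg_apply, map_neg, LinearMap.neg_apply]
  have hxyw := hbianchi x y w z
  have hyzw := hbianchi y z w x
  have hzxw := hbianchi z x w y
  have hxyz := hbianchi x y z w
  rw [hflip, hωneg w] at hxyw hyzw hzxw
  rw [hskew x y z w, hskew y z x w, hskew z x y w, hB.eq z w, hB.eq x w, hB.eq y w] at hxyz
  rw [hskew y w x z] at hxyw
  rw [hskew z w y x, hB.eq y x, hB.eq z x] at hyzw
  rw [hskew x w z y, hB.eq z y] at hzxw
  linarith

theorem Invariant.orthogonal {g : Set (Module.End ℝ V)} {W : Submodule ℝ V} (hW : Invariant g W)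
    (hg : g ⊆ coSet B) : Invariant g (B.orthogonal W) := by
  intro F hF x hx w hw
  obtain ⟨c, hc⟩ := exists_conformal_factor (hg hF)
  have h := hc w x
  rwa [show B w x = 0 from hx w hw, show B (F w) x = 0 from hx _ (hW F hF w hw), mul_zero,
    zero_add] at h

theorem Invariant.inf {g : Set (Module.End ℝ V)} {W W' : Submodule ℝ V} (hW : Invariant g W)
    (hW' : Invariant g W') : Invariant g (W ⊓ W') :=
  fun F hF x hx => ⟨hW F hF x hx.1, hW' F hF x hx.2⟩

theorem exists_invariant_isotropic (hB : B.IsSymm) {g : Set (Module.End ℝ V)} (hg : g ⊆ coSet B)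
    (hwi : WeaklyIrred B g) (hirr : ¬ Irred g) :
    ∃ K : Submodule ℝ V, Invariant g K ∧ (∀ x ∈ K, ∀ y ∈ K, B x y = 0) ∧ K ≠ ⊥ := by
  simp only [Irred, not_forall, not_or] at hirr
  obtain ⟨W, hW, hbot, htop⟩ := hirr
  refine ⟨W ⊓ B.orthogonal W, hW.inf (hW.orthogonal hg), fun x hx y hy => hy.2 x hx.1, fun hK => ?_⟩
  have hnd : IsNondegOn B W := fun x hx h =>
    (Submodule.eq_bot_iff _).1 hK x ⟨hx, fun y hy => (hB.eq y x).trans (h y hy)⟩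
  exact (hwi W hW hnd).elim hbot htop

end SkewAndConformal

section CurvatureTensors

variable {g : Set (Module.End ℝ V)} {R : V →ₗ[ℝ] V →ₗ[ℝ] Module.End ℝ V}

theorem IsCurv.self (hR : IsCurv g R) (x : V) : R x x = 0 :=
  have := IsAddTorsionFree.of_isTorsionFree ℝ (Module.End ℝ V)
  self_eq_neg.1 (hR.1 x x)

theorem IsCurv.mono {g' : Set (Module.End ℝ V)} (hR : IsCurv g R) (h : g ⊆ g') : IsCurv g' R :=
  ⟨hR.1, fun x y => h (hR.2.1 x y), hR.2.2⟩

theorem IsCurv.map_swap {M : Type*} [AddCommGroup M] [Module ℝ M] (hR : IsCurv g R)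
    (L : Module.End ℝ V →ₗ[ℝ] M) (x y : V) : L (R x y) = -L (R y x) := by
  rw [hR.1 x y, map_neg]

theorem IsCurv.pair_symm {B : LinearMap.BilinForm ℝ V} (hB : B.IsSymm)
    (hR : IsCurv (soSet B) R) (x y z w : V) : B (R x y z) w = B (R z w x) y := by
  obtain ⟨hneg, hso, hbianchi⟩ := hR
  have hskew := fun x y z w => apply_swap_of_mem_soSet hB (hso x y) z w
  have hflip : ∀ x y z w, B (R x y z) w = -B (R y x z) w := fun x y z w => by
    rw [hneg, LinearMap.neg_apply, map_neg, LinearMap.neg_apply]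
  have hcyc : ∀ x y z w, B (R x y z) w + B (R y z x) w + B (R z x y) w = 0 := fun x y z w => by
    rw [← LinearMap.add_apply, ← map_add, ← LinearMap.add_apply, ← map_add, hbianchi, map_zero,
      LinearMap.zero_apply]
  linarith [hcyc x y z w, hcyc y z w x, hcyc z w x y, hcyc w x y z, hskew x y z w,
    hskew y z x w, hskew z x y w, hskew y w z x, hskew x z y w, hskew x w z y, hskew z w x y,
    hskew w x z y, hflip x y z w, hflip z w x y, hflip x z y w, hflip x z w y, hflip y w x z,
    hflip y w z x, hflip y z x w, hflip y z w x, hflip x w z y, hflip x w y z, hskew y w x z]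

theorem IsBerger.subset_of_isCurv (hg : IsBerger g) {S : Submodule ℝ (Module.End ℝ V)}
    (hS : ∀ R, IsCurv g R → ∀ x y, R x y ∈ S) : g ⊆ S := by
  rw [← show (curvSpan g : Set (Module.End ℝ V)) = g from hg, SetLike.coe_subset_coe, curvSpan,
    Submodule.span_le]
  rintro _ ⟨R, hR, x, y, rfl⟩
  exact hS R hR x y

/-- The linear subspace underlying a Lie subalgebra given as a set. -/
def IsLieSub.toSubmodule (hg : IsLieSub g) : Submodule ℝ (Module.End ℝ V) where
  carrier := g
  zero_mem' := hg.1
  add_mem' {F G} hF hG := hg.2.1 F hF G hG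
  smul_mem' c {F} hF := hg.2.2.1 c F hF

theorem IsLieSub.bracket_mem (hg : IsLieSub g) {F G : Module.End ℝ V} (hF : F ∈ g) (hG : G ∈ g) :
    F * G - G * F ∈ g :=
  hg.2.2.2 F hF G hG

end CurvatureTensors

section Transport

variable {V' : Type*} [AddCommGroup V'] [Module ℝ V'] (e : V ≃ₗ[ℝ] V')
  {g : Set (Module.End ℝ V')}

theorem conj_apply_map (F : Module.End ℝ V) (x : V) : e.conj F (e x) = e (F x) := by
  simp [LinearEquiv.conj_apply_apply]

theorem IsLieSub.conj_preimage (hg : IsLieSub g) : IsLieSub (e.conj ⁻¹' g) := by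
  have hmul : ∀ F G : Module.End ℝ V, e.conj (F * G) = e.conj F * e.conj G :=
    fun F G => e.conj_comp G F
  refine ⟨?_, fun F hF G hG => ?_, fun c F hF => ?_, fun F hF G hG => ?_⟩
  · simpa only [Set.mem_preimage, map_zero] using hg.1
  · simpa only [Set.mem_preimage, map_add] using hg.2.1 _ hF _ hG
  · simpa only [Set.mem_preimage, map_smul] using hg.2.2.1 c _ hF
  · simpa only [Set.mem_preimage, map_sub, hmul] using hg.bracket_mem hF hG

theorem IsCurv.conj_preimage {R : V' →ₗ[ℝ] V' →ₗ[ℝ] Module.End ℝ V'} (hR : IsCurv g R) :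
    IsCurv (e.conj ⁻¹' g)
      ((R.compl₁₂ (e : V →ₗ[ℝ] V') (e : V →ₗ[ℝ] V')).compr₂ e.symm.conj.toLinearMap) := by
  refine ⟨fun x y => ?_, fun x y => ?_, fun x y z => ?_⟩
  · simp [hR.1 (e x) (e y)]
  · simpa using hR.2.1 (e x) (e y)
  · simpa [LinearEquiv.conj_apply_apply] using
      congrArg e.symm (hR.2.2 (e x) (e y) (e z))

theorem IsBerger.conj_preimage (hg : IsBerger g) : IsBerger (e.conj ⁻¹' g) := by
  have hcoe : e.conj ⁻¹' g = (curvSpan g).comap e.conj.toLinearMap := by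
    rw [Submodule.comap_coe, show (curvSpan g : Set (Module.End ℝ V')) = g from hg]
    rfl
  refine Set.Subset.antisymm ?_ ?_
  · rw [hcoe, SetLike.coe_subset_coe, curvSpan, Submodule.span_le, ← hcoe]
    rintro _ ⟨R, hR, x, y, rfl⟩
    exact hR.2.1 x y
  · intro F hF
    have hspan := hg.subset_of_isCurv
      (S := (curvSpan (e.conj ⁻¹' g)).comap e.symm.conj.toLinearMap) fun R hR x y =>
        Submodule.subset_span ⟨_, hR.conj_preimage e, e.symm x, e.symm y, by simp⟩
    simpa using hspan hF

theorem Invariant.map_of_conj_preimage {W : Submodule ℝ V} (hW : Invariant (e.conj ⁻¹' g) W) :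
    Invariant g (W.map e.toLinearMap) := by
  rintro F hF _ ⟨x, hx, rfl⟩
  obtain ⟨G, rfl⟩ := e.conj.surjective F
  exact ⟨G x, hW G hF x hx, (conj_apply_map e G x).symm⟩

variable {B : LinearMap.BilinForm ℝ V} {B' : LinearMap.BilinForm ℝ V'} {e}

theorem WeaklyIrred.conj_preimage (he : ∀ x y, B' (e x) (e y) = B x y)
    (hg : WeaklyIrred B' g) : WeaklyIrred B (e.conj ⁻¹' g) := by
  intro W hW hnd
  have hnd' : IsNondegOn B' (W.map e.toLinearMap) := by
    rintro _ ⟨x, hx, rfl⟩ h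
    have hx0 : x = 0 := hnd x hx fun y hy => by
      rw [← he]
      exact h _ ⟨y, hy, rfl⟩
    rw [hx0, map_zero]
  refine (hg _ hW.map_of_conj_preimage hnd').imp (fun h => ?_) fun h => ?_
  · exact (Submodule.map_eq_bot_iff (e := e)).1 h
  · exact (Submodule.map_eq_top_iff (e := e)).1 h

theorem conj_preimage_soSet (he : ∀ x y, B' (e x) (e y) = B x y) :
    e.conj ⁻¹' soSet B' = soSet B := by
  ext F
  simp only [Set.mem_preimage, soSet, Set.mem_ofPred_eq, e.surjective.forall, conj_apply_map, he]

theorem conj_preimage_coSet (he : ∀ x y, B' (e x) (e y) = B x y) :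
    e.conj ⁻¹' coSet B' = coSet B := by
  ext F
  have hone : e.conj (1 : Module.End ℝ V) = 1 := e.conj_id
  refine exists_congr fun c => ?_
  simp only [← conj_preimage_soSet he, e.conj.surjective.exists, Set.mem_preimage, ← hone,
    ← map_smul, ← map_add, e.conj.injective.eq_iff]

end Transport
section LinearAlgebra

theorem trace_mul_bracket {K M : Type*} [CommRing K] [AddCommGroup M] [Module K M]
    (A B C : Module.End K M) :
    LinearMap.trace K M (A * (B * C - C * B)) = LinearMap.trace K M ((A * B - B * A) * C) := by
  rw [mul_sub, sub_mul, map_sub, map_sub, ← mul_assoc, ← mul_assoc,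
    LinearMap.trace_mul_cycle K A C]

variable {K : Type*} [Field K] {M E : Type*} [AddCommGroup M] [Module K M] [AddCommGroup E]
  [Module K E]

theorem exists_dual_eq_comp_on (S : Submodule K M) (L : Dual K M) (p : M →ₗ[K] E)
    (h : ∀ x ∈ S, p x = 0 → L x = 0) : ∃ θ : Dual K E, ∀ x ∈ S, L x = θ (p x) := by
  have hL : L.domRestrict S ∈ LinearMap.range (p.domRestrict S).dualMap := by
    rw [LinearMap.range_dualMap_eq_dualAnnihilator_ker, Submodule.mem_dualAnnihilator]
    exact fun x hx => h x x.2 hx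
  obtain ⟨θ, hθ⟩ := hL
  exact ⟨θ, fun x hx => (LinearMap.congr_fun hθ ⟨x, hx⟩).symm⟩

theorem mem_of_apply_mem_of_injective [FiniteDimensional K M] {f : Module.End K M}
    (hf : Function.Injective f) {N : Submodule K M} (hN : ∀ x ∈ N, f x ∈ N) {x : M}
    (hx : f x ∈ N) : x ∈ N := by
  have hmap : N.map f = N := Submodule.eq_of_le_of_finrank_eq (Submodule.map_le_iff_le_comap.2 hN)
    (N.equivMapOfInjective f hf).finrank_eq.symm
  rw [← hmap] at hx
  exact (Function.Injective.mem_set_image hf).1 hx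

theorem nondegenerate_of_anisotropic {B : LinearMap.BilinForm K M} (hB : B.IsSymm)
    (h : ∀ x, B x x = 0 → x = 0) : B.Nondegenerate :=
  LinearMap.BilinForm.IsSymm.isRefl hB |>.nondegenerate_iff_separatingLeft.2 fun x hx => h x (hx x)

theorem exists_mem_forall_mem_apply_eq_of_anisotropic [FiniteDimensional K M]
    {B : LinearMap.BilinForm K M} (hB : B.IsSymm)
    {S : Submodule K M} (hS : ∀ x ∈ S, B x x = 0 → x = 0) (l : Dual K M) :
    ∃ z ∈ S, ∀ x ∈ S, B z x = l x := by
  have hnd : (B.restrict S).Nondegenerate :=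
    nondegenerate_of_anisotropic (LinearMap.BilinForm.IsSymm.restrict hB S)
      fun x hx => Subtype.ext (hS x x.2 hx)
  exact ⟨_, (((B.restrict S).toDual hnd).symm (l.domRestrict S)).2, fun x hx =>
    LinearMap.BilinForm.apply_toDual_symm_apply (hB := hnd) (l.domRestrict S) ⟨x, hx⟩⟩

end LinearAlgebra

section EuclideanForm

variable {n : ℕ}

theorem dotE_isSymm : (dotE n).IsSymm :=
  ⟨fun x y => dotProduct_comm x y⟩

theorem dotE_self_eq_zero {x : Fin n → ℝ} : dotE n x x = 0 ↔ x = 0 :=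
  show x ⬝ᵥ x = 0 ↔ x = 0 from dotProduct_self_eq_zero

theorem dotE_self_nonneg (x : Fin n → ℝ) : 0 ≤ dotE n x x :=
  show 0 ≤ ∑ i, x i * x i from Finset.sum_nonneg fun i _ => mul_self_nonneg (x i)

theorem dotE_nondegenerate : (dotE n).Nondegenerate :=
  nondegenerate_of_anisotropic dotE_isSymm fun _ => dotE_self_eq_zero.1

theorem eq_top_of_dotE_orthogonal_eq_bot {N : Submodule ℝ (Fin n → ℝ)}
    (h : (dotE n).orthogonal N = ⊥) : N = ⊤ := by
  rw [← LinearMap.BilinForm.orthogonal_orthogonal dotE_nondegenerate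
    (LinearMap.BilinForm.IsSymm.isRefl dotE_isSymm) N, h, LinearMap.BilinForm.orthogonal_bot]

theorem injective_smul_one_add_of_mem_soE {a : ℝ} (ha : a ≠ 0) {A : Module.End ℝ (Fin n → ℝ)}
    (hA : A ∈ soE n) : Function.Injective (a • 1 + A : Module.End ℝ (Fin n → ℝ)) := by
  refine (injective_iff_map_eq_zero _).2 fun x hx => ?_
  have h : dotE n (a • x + A x) x = 0 := by
    rw [show a • x + A x = 0 from hx, map_zero, LinearMap.zero_apply]
  rw [map_add, LinearMap.add_apply, apply_self_of_mem_soSet dotE_isSymm hA, add_zero, map_smul,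
    LinearMap.smul_apply, smul_eq_mul] at h
  exact dotE_self_eq_zero.1 ((mul_eq_zero.1 h).resolve_left ha)

theorem apply_mem_dotE_orthogonal {A : Module.End ℝ (Fin n → ℝ)} (hA : A ∈ soE n)
    {N : Submodule ℝ (Fin n → ℝ)} (hN : ∀ x ∈ N, A x ∈ N) {x : Fin n → ℝ}
    (hx : x ∈ (dotE n).orthogonal N) : A x ∈ (dotE n).orthogonal N := fun y hy => by
  have h := apply_left_of_mem_soSet hA y x
  rw [show dotE n (A y) x = 0 from hx _ (hN y hy)] at h
  exact neg_eq_zero.1 h.symm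

theorem minkB_apply (x y : Mink n) :
    minkB n x y = x.1 * y.2.2 + x.2.2 * y.1 + dotE n x.2.1 y.2.1 := rfl

theorem minkB_isSymm : (minkB n).IsSymm :=
  ⟨fun x y => by simp only [minkB_apply, dotE_isSymm.eq x.2.1]; ring⟩

end EuclideanForm

section Components

variable {n : ℕ}

/-- The inclusion `emb` of `ℝⁿ` into Minkowski space as a linear map. -/
def embL : (Fin n → ℝ) →ₗ[ℝ] Mink n where
  toFun := emb
  map_add' x y := by simp [emb]
  map_smul' c x := by simp [emb]

theorem embL_apply (x : Fin n → ℝ) : embL x = ((0, x, 0) : Mink n) := rfl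

theorem witt_decomposition (w : Mink n) : w.1 • pvec n + embL w.2.1 + w.2.2 • qvec n = w := by
  simp [pvec, qvec, embL_apply]

/-- The component `b` of `(b, a, A, X) = b·id + (a, A, X)`, extended linearly to all
endomorphisms. -/
def scalarPart : Module.End ℝ (Mink n) →ₗ[ℝ] ℝ where
  toFun F := ((F (pvec n)).1 + (F (qvec n)).2.2) / 2
  map_add' F G := by simp only [LinearMap.add_apply, Prod.fst_add, Prod.snd_add]; ring
  map_smul' c F := by
    simp only [LinearMap.smul_apply, Prod.smul_fst, Prod.smul_snd, smul_eq_mul, RingHom.id_apply]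
    ring

/-- The component `a` of `(b, a, A, X)`, extended linearly to all endomorphisms. -/
def boostPart : Module.End ℝ (Mink n) →ₗ[ℝ] ℝ where
  toFun F := ((F (pvec n)).1 - (F (qvec n)).2.2) / 2
  map_add' F G := by simp only [LinearMap.add_apply, Prod.fst_add, Prod.snd_add]; ring
  map_smul' c F := by
    simp only [LinearMap.smul_apply, Prod.smul_fst, Prod.smul_snd, smul_eq_mul, RingHom.id_apply]
    ring

/-- The component `X` of `(b, a, A, X)`, extended linearly to all endomorphisms. -/
def transPart : Module.End ℝ (Mink n) →ₗ[ℝ] (Fin n → ℝ) where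
  toFun F := -(F (qvec n)).2.1
  map_add' F G := by simp only [LinearMap.add_apply, Prod.fst_add, Prod.snd_add, neg_add]
  map_smul' c F := by
    simp only [LinearMap.smul_apply, Prod.smul_fst, Prod.smul_snd, smul_neg, RingHom.id_apply]

/-- The component `A` of `(b, a, A, X)`, extended linearly to all endomorphisms. -/
def rotPart : Module.End ℝ (Mink n) →ₗ[ℝ] Module.End ℝ (Fin n → ℝ) where
  toFun F := LinearMap.fst ℝ _ _ ∘ₗ LinearMap.snd ℝ _ _ ∘ₗ F ∘ₗ embL - scalarPart F • 1
  map_add' F G := by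
    simp only [LinearMap.add_comp, LinearMap.comp_add, map_add, add_smul]
    abel
  map_smul' c F := by
    simp only [LinearMap.smul_comp, LinearMap.comp_smul, map_smul, smul_assoc, smul_sub,
      RingHom.id_apply]

variable (b a : ℝ) (A : Module.End ℝ (Fin n → ℝ)) (X : Fin n → ℝ)

theorem coElem_apply (w : Mink n) : coElem b a A X w =
    ((b + a) * w.1 + dotE n X w.2.1, b • w.2.1 + A w.2.1 - w.2.2 • X, (b - a) * w.2.2) := rfl

@[simp]
theorem scalarPart_coElem : scalarPart (coElem b a A X) = b := by
  simp [scalarPart, coElem_apply, pvec, qvec]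

@[simp]
theorem boostPart_coElem : boostPart (coElem b a A X) = a := by
  simp [boostPart, coElem_apply, pvec, qvec]

@[simp]
theorem transPart_coElem : transPart (coElem b a A X) = X := by
  simp [transPart, coElem_apply, qvec]

@[simp]
theorem rotPart_coElem : rotPart (coElem b a A X) = A := by
  refine LinearMap.ext fun x => ?_
  simp [rotPart, coElem_apply, embL_apply]

theorem coElem_add (b' a' : ℝ) (A' : Module.End ℝ (Fin n → ℝ)) (X' : Fin n → ℝ) :
    coElem b a A X + coElem b' a' A' X' = coElem (b + b') (a + a') (A + A') (X + X') := by
  refine LinearMap.ext fun w => Prod.ext ?_ (Prod.ext ?_ ?_) <;>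
    simp only [coElem_apply, LinearMap.add_apply, Prod.mk_add_mk, map_add]
  · ring
  · module
  · ring

theorem smul_coElem (c : ℝ) :
    c • coElem b a A X = coElem (c * b) (c * a) (c • A) (c • X) := by
  refine LinearMap.ext fun w => Prod.ext ?_ (Prod.ext ?_ ?_) <;>
    simp only [coElem_apply, LinearMap.smul_apply, Prod.smul_mk, map_smul, smul_eq_mul]
  · ring
  · module
  · ring

end Components

section StabilizerOfLine

variable {n : ℕ} {F G : Module.End ℝ (Mink n)}

theorem eq_coElem_of_mem_coRp (hF : F ∈ coRp n) :
    F = coElem (scalarPart F) (boostPart F) (rotPart F) (transPart F) := by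
  obtain ⟨b, a, A, -, X, rfl⟩ := hF
  simp only [scalarPart_coElem, boostPart_coElem, rotPart_coElem, transPart_coElem]

theorem rotPart_mem_soE (hF : F ∈ coRp n) : rotPart F ∈ soE n := by
  obtain ⟨b, a, A, hA, X, rfl⟩ := hF
  rwa [rotPart_coElem]

theorem apply_of_mem_coRp (hF : F ∈ coRp n) (w : Mink n) :
    F w = ((scalarPart F + boostPart F) * w.1 + dotE n (transPart F) w.2.1,
      scalarPart F • w.2.1 + rotPart F w.2.1 - w.2.2 • transPart F,
      (scalarPart F - boostPart F) * w.2.2) := by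
  conv_lhs => rw [eq_coElem_of_mem_coRp hF]
  rfl

theorem apply_pvec (hF : F ∈ coRp n) : F (pvec n) = (scalarPart F + boostPart F, 0, 0) := by
  simp [apply_of_mem_coRp hF, pvec]

theorem apply_qvec (hF : F ∈ coRp n) :
    F (qvec n) = (0, -transPart F, scalarPart F - boostPart F) := by
  simp [apply_of_mem_coRp hF, qvec]

theorem apply_embL (hF : F ∈ coRp n) (x : Fin n → ℝ) :
    F (embL x) = (dotE n (transPart F) x, scalarPart F • x + rotPart F x, 0) := by
  simp [apply_of_mem_coRp hF, embL_apply]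

theorem mem_soSet_minkB_of_scalarPart_eq_zero (hF : F ∈ coRp n) (hb : scalarPart F = 0) :
    F ∈ soSet (minkB n) := by
  intro x y
  have hskew := rotPart_mem_soE hF x.2.1 y.2.1
  simp only [apply_of_mem_coRp hF, hb, minkB_apply, map_add, map_sub, map_smul,
    LinearMap.add_apply, LinearMap.sub_apply, LinearMap.smul_apply, smul_eq_mul,
    dotE_isSymm.eq x.2.1 (transPart F)]
  linear_combination hskew

theorem bracket_eq_coElem (hF : F ∈ coRp n) (hG : G ∈ coRp n) :
    F * G - G * F = coElem 0 0 (rotPart F * rotPart G - rotPart G * rotPart F)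
      (boostPart F • transPart G + rotPart F (transPart G) -
        (boostPart G • transPart F + rotPart G (transPart F))) := by
  have hskewF := apply_left_of_mem_soSet (rotPart_mem_soE hF)
  have hskewG := apply_left_of_mem_soSet (rotPart_mem_soE hG)
  refine LinearMap.ext fun w => Prod.ext ?_ (Prod.ext ?_ ?_) <;>
    simp only [LinearMap.sub_apply, Module.End.mul_apply, apply_of_mem_coRp hF,
      apply_of_mem_coRp hG, coElem_apply, Prod.mk_sub_mk, map_add, map_sub, map_smul,
      LinearMap.add_apply, LinearMap.smul_apply, smul_eq_mul, hskewF, hskewG]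
  · rw [dotE_isSymm.eq (transPart G) (transPart F)]
    ring
  · module
  · ring

theorem isLieSub_rotPart_image {g : Set (Module.End ℝ (Mink n))} (hg : IsLieSub g)
    (hgp : g ⊆ coRp n) : IsLieSub (rotPart '' g) := by
  refine ⟨⟨0, hg.1, map_zero _⟩, ?_, ?_, ?_⟩
  · rintro _ ⟨F, hF, rfl⟩ _ ⟨G, hG, rfl⟩
    exact ⟨F + G, hg.2.1 F hF G hG, map_add _ _ _⟩
  · rintro c _ ⟨F, hF, rfl⟩
    exact ⟨c • F, hg.2.2.1 c F hF, map_smul _ _ _⟩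
  · rintro _ ⟨F, hF, rfl⟩ _ ⟨G, hG, rfl⟩
    refine ⟨_, hg.bracket_mem hF hG, ?_⟩
    rw [bracket_eq_coElem (hgp hF) (hgp hG), rotPart_coElem]

end StabilizerOfLine

section CurvatureComponents

variable {n : ℕ} {R : Mink n →ₗ[ℝ] Mink n →ₗ[ℝ] Module.End ℝ (Mink n)}

theorem IsCurv.bianchi_pvec_qvec_embL (hR : IsCurv (coRp n) R) (U : Fin n → ℝ) :
    dotE n (transPart (R (pvec n) (qvec n))) U +
        (scalarPart (R (qvec n) (embL U)) + boostPart (R (qvec n) (embL U))) = 0 ∧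
      scalarPart (R (pvec n) (qvec n)) • U + rotPart (R (pvec n) (qvec n)) U -
        transPart (R (embL U) (pvec n)) = 0 ∧
      scalarPart (R (embL U) (pvec n)) - boostPart (R (embL U) (pvec n)) = 0 := by
  have h := hR.2.2 (pvec n) (qvec n) (embL U)
  rw [apply_embL (hR.2.1 _ _), apply_pvec (hR.2.1 _ _), apply_qvec (hR.2.1 _ _)] at h
  simpa only [Prod.mk_add_mk, Prod.mk_eq_zero, add_zero, zero_add, ← sub_eq_add_neg] using h

theorem IsCurv.bianchi_pvec_embL_embL (hR : IsCurv (coRp n) R) (U V : Fin n → ℝ) :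
    dotE n (transPart (R (pvec n) (embL U))) V +
        (scalarPart (R (embL U) (embL V)) + boostPart (R (embL U) (embL V))) +
        dotE n (transPart (R (embL V) (pvec n))) U = 0 ∧
      scalarPart (R (pvec n) (embL U)) • V + rotPart (R (pvec n) (embL U)) V +
        (scalarPart (R (embL V) (pvec n)) • U + rotPart (R (embL V) (pvec n)) U) = 0 := by
  have h := hR.2.2 (pvec n) (embL U) (embL V)
  rw [apply_embL (hR.2.1 _ _), apply_pvec (hR.2.1 _ _), apply_embL (hR.2.1 _ _)] at h
  simpa only [Prod.mk_add_mk, Prod.mk_eq_zero, add_zero, and_true] using h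

theorem IsCurv.bianchi_embL_embL_qvec (hR : IsCurv (coRp n) R) (U V : Fin n → ℝ) :
    -transPart (R (embL U) (embL V)) +
        (scalarPart (R (embL V) (qvec n)) • U + rotPart (R (embL V) (qvec n)) U) +
        (scalarPart (R (qvec n) (embL U)) • V + rotPart (R (qvec n) (embL U)) V) = 0 ∧
      scalarPart (R (embL U) (embL V)) - boostPart (R (embL U) (embL V)) = 0 := by
  have h := hR.2.2 (embL U) (embL V) (qvec n)
  rw [apply_qvec (hR.2.1 _ _), apply_embL (hR.2.1 _ _), apply_embL (hR.2.1 _ _)] at h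
  simp only [Prod.mk_add_mk, Prod.mk_eq_zero, add_zero] at h
  exact h.2

theorem IsCurv.bianchi_embL (hR : IsCurv (coRp n) R) (U V W : Fin n → ℝ) :
    dotE n (transPart (R (embL U) (embL V))) W + dotE n (transPart (R (embL V) (embL W))) U +
        dotE n (transPart (R (embL W) (embL U))) V = 0 ∧
      scalarPart (R (embL U) (embL V)) • W + rotPart (R (embL U) (embL V)) W +
        (scalarPart (R (embL V) (embL W)) • U + rotPart (R (embL V) (embL W)) U) +
        (scalarPart (R (embL W) (embL U)) • V + rotPart (R (embL W) (embL U)) V) = 0 := by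
  have h := hR.2.2 (embL U) (embL V) (embL W)
  rw [apply_embL (hR.2.1 _ _), apply_embL (hR.2.1 _ _), apply_embL (hR.2.1 _ _)] at h
  simpa only [Prod.mk_add_mk, Prod.mk_eq_zero, add_zero, and_true] using h

theorem IsCurv.boostPart_pvec_embL (hR : IsCurv (coRp n) R) (U : Fin n → ℝ) :
    boostPart (R (pvec n) (embL U)) = scalarPart (R (pvec n) (embL U)) := by
  rw [hR.map_swap boostPart, hR.map_swap scalarPart,
    sub_eq_zero.1 (hR.bianchi_pvec_qvec_embL U).2.2]

theorem IsCurv.boostPart_embL_embL (hR : IsCurv (coRp n) R) (U V : Fin n → ℝ) :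
    boostPart (R (embL U) (embL V)) = scalarPart (R (embL U) (embL V)) :=
  (sub_eq_zero.1 (hR.bianchi_embL_embL_qvec U V).2).symm

theorem IsCurv.transPart_pvec_embL (hR : IsCurv (coRp n) R) (U : Fin n → ℝ) :
    transPart (R (pvec n) (embL U)) =
      -(scalarPart (R (pvec n) (qvec n)) • U + rotPart (R (pvec n) (qvec n)) U) := by
  rw [hR.map_swap transPart, sub_eq_zero.1 (hR.bianchi_pvec_qvec_embL U).2.1]

theorem IsCurv.transPart_embL_embL (hR : IsCurv (coRp n) R) (U V : Fin n → ℝ) :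
    transPart (R (embL U) (embL V)) =
      scalarPart (R (embL V) (qvec n)) • U + rotPart (R (embL V) (qvec n)) U -
        (scalarPart (R (embL U) (qvec n)) • V + rotPart (R (embL U) (qvec n)) V) := by
  have h := (hR.bianchi_embL_embL_qvec U V).1
  rw [hR.map_swap scalarPart (qvec n), hR.map_swap rotPart (qvec n), LinearMap.neg_apply,
    neg_smul] at h
  linear_combination (exp := 1) -h

theorem IsCurv.dotE_transPart_pvec_qvec (hR : IsCurv (coRp n) R) (U : Fin n → ℝ) :
    dotE n (transPart (R (pvec n) (qvec n))) U =
      scalarPart (R (embL U) (qvec n)) + boostPart (R (embL U) (qvec n)) := by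
  rw [hR.map_swap scalarPart, hR.map_swap boostPart]
  linarith [(hR.bianchi_pvec_qvec_embL U).1]

theorem IsCurv.smul_add_rotPart_pvec_embL_comm (hR : IsCurv (coRp n) R) (U V : Fin n → ℝ) :
    scalarPart (R (pvec n) (embL U)) • V + rotPart (R (pvec n) (embL U)) V =
      scalarPart (R (pvec n) (embL V)) • U + rotPart (R (pvec n) (embL V)) U := by
  have h := (hR.bianchi_pvec_embL_embL U V).2
  rw [hR.map_swap scalarPart (embL V), hR.map_swap rotPart (embL V), LinearMap.neg_apply,
    neg_smul] at h
  linear_combination (exp := 1) h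

theorem IsCurv.scalarPart_embL_embL (hR : IsCurv (coRp n) R) (U V : Fin n → ℝ) :
    scalarPart (R (embL U) (embL V)) = dotE n (rotPart (R (pvec n) (qvec n)) U) V := by
  have h := (hR.bianchi_pvec_embL_embL U V).1
  have hskew := apply_swap_of_mem_soSet dotE_isSymm
    (rotPart_mem_soE (hR.2.1 (pvec n) (qvec n))) U V
  rw [hR.map_swap transPart (embL V), hR.transPart_pvec_embL, hR.transPart_pvec_embL,
    hR.boostPart_embL_embL] at h
  simp only [neg_neg, map_neg, map_add, map_smul, LinearMap.neg_apply, LinearMap.add_apply,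
    LinearMap.smul_apply, dotE_isSymm.eq V U] at h
  linarith

theorem IsCurv.mem_of_witt {g : Set (Module.End ℝ (Mink n))} (hR : IsCurv g R) {M : Type*}
    [AddCommGroup M] [Module ℝ M] {L : Module.End ℝ (Mink n) →ₗ[ℝ] M} {S : Submodule ℝ M}
    (hpq : L (R (pvec n) (qvec n)) ∈ S) (hpU : ∀ U, L (R (pvec n) (embL U)) ∈ S)
    (hUq : ∀ U, L (R (embL U) (qvec n)) ∈ S) (hUV : ∀ U V, L (R (embL U) (embL V)) ∈ S)
    (x y : Mink n) : L (R x y) ∈ S := by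
  have hqp := hR.map_swap L (qvec n) (pvec n) ▸ S.neg_mem hpq
  have hUp := fun U => hR.map_swap L (embL U) (pvec n) ▸ S.neg_mem (hpU U)
  have hqU := fun U => hR.map_swap L (qvec n) (embL U) ▸ S.neg_mem (hUq U)
  rw [← witt_decomposition x, ← witt_decomposition y]
  simp only [map_add, map_smul, LinearMap.add_apply, LinearMap.smul_apply, hR.self, smul_zero,
    add_zero, zero_add]
  repeat' first | apply_assumption | apply S.add_mem | apply S.smul_mem

end CurvatureComponents

section WeakBerger

variable {n : ℕ} {g : Set (Module.End ℝ (Mink n))}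
  {R : Mink n →ₗ[ℝ] Mink n →ₗ[ℝ] Module.End ℝ (Mink n)}

theorem IsCurv.isWeakCurv_pvec (hgp : g ⊆ coRp n) (hR : IsCurv g R) :
    IsWeakCurv n (rotPart '' g) (rotPart ∘ₗ R (pvec n) ∘ₗ embL) :=
  ⟨fun U => ⟨_, hR.2.1 (pvec n) (embL U), rfl⟩, fun U V W =>
    cyclic_skew_eq_zero dotE_isSymm (fun U => rotPart_mem_soE (hgp (hR.2.1 (pvec n) (embL U))))
      (fun U => scalarPart (R (pvec n) (embL U))) <| by
        simp only [(hR.mono hgp).smul_add_rotPart_pvec_embL_comm V U,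
          (hR.mono hgp).smul_add_rotPart_pvec_embL_comm W V,
          (hR.mono hgp).smul_add_rotPart_pvec_embL_comm W U, sub_self, map_zero,
          LinearMap.zero_apply, add_zero]⟩

theorem IsCurv.isWeakCurv_qvec (hgp : g ⊆ coRp n) (hR : IsCurv g R) :
    IsWeakCurv n (rotPart '' g) (rotPart ∘ₗ R.flip (qvec n) ∘ₗ embL) :=
  ⟨fun U => ⟨_, hR.2.1 (embL U) (qvec n), rfl⟩, fun U V W =>
    cyclic_skew_eq_zero dotE_isSymm (fun U => rotPart_mem_soE (hgp (hR.2.1 (embL U) (qvec n))))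
      (fun U => scalarPart (R (embL U) (qvec n))) <| by
        simpa only [(hR.mono hgp).transPart_embL_embL] using
          ((hR.mono hgp).bianchi_embL U V W).1⟩

theorem IsCurv.isWeakCurv_embL (hg : IsLieSub g) (hgp : g ⊆ coRp n) (hR : IsCurv g R)
    (Z : Fin n → ℝ) :
    IsWeakCurv n (rotPart '' g) (rotPart ∘ₗ R.flip (embL Z) ∘ₗ embL -
      (dotE n Z).smulRight (rotPart (R (pvec n) (qvec n)))) := by
  refine ⟨fun U => ?_, fun U V W => ?_⟩
  · exact (isLieSub_rotPart_image hg hgp).toSubmodule.sub_mem ⟨_, hR.2.1 (embL U) (embL Z), rfl⟩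
      (Submodule.smul_mem _ _ ⟨_, hR.2.1 (pvec n) (qvec n), rfl⟩)
  · have h := cyclic_of_conformal_bianchi dotE_isSymm
      (A := fun U V => rotPart (R (embL U) (embL V)))
      (fun U V => rotPart_mem_soE (hgp (hR.2.1 (embL U) (embL V))))
      (fun U V => hR.map_swap rotPart _ _)
      (fun U V => hR.map_swap scalarPart (embL U) (embL V))
      (fun U V W => ((hR.mono hgp).bianchi_embL U V W).2) Z U V W
    simp only [(hR.mono hgp).scalarPart_embL_embL] at h
    simp only [LinearMap.sub_apply, LinearMap.comp_apply, LinearMap.flip_apply,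
      LinearMap.smulRight_apply, LinearMap.smul_apply, map_sub, map_smul, smul_eq_mul]
    linarith

theorem IsCurv.rotPart_mem_weakSpan (hg : IsLieSub g) (hgp : g ⊆ coRp n) (hR : IsCurv g R)
    (x y : Mink n) : rotPart (R x y) ∈ weakSpan n (rotPart '' g) := by
  have hUV : ∀ U Z, rotPart (R (embL U) (embL Z)) - dotE n Z U • rotPart (R (pvec n) (qvec n)) ∈
      weakSpan n (rotPart '' g) :=
    fun U Z => Submodule.subset_span ⟨_, hR.isWeakCurv_embL hg hgp Z, U, rfl⟩
  have hpq : rotPart (R (pvec n) (qvec n)) ∈ weakSpan n (rotPart '' g) := by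
    rcases isEmpty_or_nonempty (Fin n) with hn | ⟨⟨i⟩⟩
    · convert Submodule.zero_mem _
      exact LinearMap.ext fun x => Subsingleton.elim _ _
    · have h := hUV (Pi.single i 1) (Pi.single i 1)
      rw [show dotE n (Pi.single i 1) (Pi.single i 1) = 1 by simp [dotE, Pi.single_apply],
        hR.self, map_zero, zero_sub, one_smul] at h
      exact (Submodule.neg_mem_iff _).1 h
  exact hR.mem_of_witt hpq
    (fun U => Submodule.subset_span ⟨_, hR.isWeakCurv_pvec hgp, U, rfl⟩)
    (fun U => Submodule.subset_span ⟨_, hR.isWeakCurv_qvec hgp, U, rfl⟩)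
    (fun U Z => (Submodule.sub_mem_iff_left _ (Submodule.smul_mem _ _ hpq)).1 (hUV U Z)) x y

theorem isWeakBerger_rotPart_image (hg : IsLieSub g) (hgp : g ⊆ coRp n) (hB : IsBerger g) :
    IsWeakBerger n (rotPart '' g) := by
  refine Set.Subset.antisymm ?_ ?_
  · have hspan : weakSpan n (rotPart '' g) ≤ (isLieSub_rotPart_image hg hgp).toSubmodule := by
      refine Submodule.span_le.2 ?_
      rintro _ ⟨P, hP, U, rfl⟩
      exact hP.1 U
    exact hspan
  · exact Set.image_subset_iff.2 <| hB.subset_of_isCurv (S := (weakSpan n _).comap rotPart)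
      fun R hR => hR.rotPart_mem_weakSpan hg hgp

end WeakBerger

section Translations

variable {n : ℕ} {g : Set (Module.End ℝ (Mink n))} {F : Module.End ℝ (Mink n)}
  {X U V : Fin n → ℝ}

/-- The elements `(0, 0, 0, X)` of `co(1,n+1)_{ℝp}`, as a linear map in `X`. -/
def translation : (Fin n → ℝ) →ₗ[ℝ] Module.End ℝ (Mink n) where
  toFun X := coElem 0 0 0 X
  map_add' X Y := by simp only [coElem_add, add_zero]
  map_smul' c X := by simp only [smul_coElem, mul_zero, smul_zero, RingHom.id_apply]

/-- The space `N` of all `X ∈ ℝⁿ` with `(0, 0, 0, X) ∈ 𝔤`. -/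
def translations (hg : IsLieSub g) : Submodule ℝ (Fin n → ℝ) :=
  hg.toSubmodule.comap translation

theorem smul_add_rotPart_mem_translations (hg : IsLieSub g) (hgp : g ⊆ coRp n) (hF : F ∈ g)
    (hX : X ∈ translations hg) : boostPart F • X + rotPart F X ∈ translations hg := by
  have hX' : coElem 0 0 0 X ∈ g := hX
  have h := hg.bracket_mem hF hX'
  rw [bracket_eq_coElem (hgp hF) (hgp hX')] at h
  simp only [rotPart_coElem, transPart_coElem, boostPart_coElem, mul_zero, zero_mul, sub_zero,
    zero_smul, LinearMap.zero_apply, add_zero] at h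
  exact h

theorem rotPart_mem_translations (hg : IsLieSub g) (hgp : g ⊆ coRp n) (hF : F ∈ g)
    (hX : X ∈ translations hg) : rotPart F X ∈ translations hg :=
  (Submodule.add_mem_iff_right _ (Submodule.smul_mem _ _ hX)).1
    (smul_add_rotPart_mem_translations hg hgp hF hX)

theorem transPart_mem_translations (hg : IsLieSub g) (hgp : g ⊆ coRp n) (hF : F ∈ g)
    (hb : scalarPart F = 0) (ha : boostPart F = 0) (hA : rotPart F = 0) :
    transPart F ∈ translations hg := by
  have h := eq_coElem_of_mem_coRp (hgp hF)
  rw [hb, ha, hA] at h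
  exact show coElem 0 0 0 (transPart F) ∈ g from h ▸ hF

end Translations

section BoostFree

variable {n : ℕ} {g : Set (Module.End ℝ (Mink n))}
  {R : Mink n →ₗ[ℝ] Mink n →ₗ[ℝ] Module.End ℝ (Mink n)}

theorem IsCurv.scalarPart_pvec_embL_eq_zero (hR : IsCurv (coRp n) R)
    (ha : ∀ x y, boostPart (R x y) = 0) (U : Fin n → ℝ) :
    scalarPart (R (pvec n) (embL U)) = 0 := by
  rw [← hR.boostPart_pvec_embL, ha]

theorem IsCurv.scalarPart_embL_embL_eq_zero (hR : IsCurv (coRp n) R)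
    (ha : ∀ x y, boostPart (R x y) = 0) (U V : Fin n → ℝ) :
    scalarPart (R (embL U) (embL V)) = 0 := by
  rw [← hR.boostPart_embL_embL, ha]

theorem IsCurv.rotPart_pvec_qvec_eq_zero (hR : IsCurv (coRp n) R)
    (ha : ∀ x y, boostPart (R x y) = 0) : rotPart (R (pvec n) (qvec n)) = 0 := by
  refine LinearMap.ext fun U => dotE_nondegenerate.1 _ fun V => ?_
  rw [← hR.scalarPart_embL_embL, hR.scalarPart_embL_embL_eq_zero ha]

theorem IsCurv.rotPart_pvec_embL_eq_zero (hR : IsCurv (coRp n) R)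
    (ha : ∀ x y, boostPart (R x y) = 0) (U : Fin n → ℝ) : rotPart (R (pvec n) (embL U)) = 0 := by
  have hmem : rotPart ∘ₗ R (pvec n) ∘ₗ embL ∈ firstProlong (soE n) :=
    ⟨fun U => rotPart_mem_soE (hR.2.1 _ _), fun U V => by
      simpa only [hR.scalarPart_pvec_embL_eq_zero ha, zero_smul, zero_add, LinearMap.comp_apply]
        using hR.smul_add_rotPart_pvec_embL_comm U V⟩
  rw [soE, firstProlong_soSet dotE_isSymm dotE_nondegenerate.1] at hmem
  exact LinearMap.congr_fun hmem U

theorem IsCurv.isCurv_soE (hR : IsCurv (coRp n) R) (ha : ∀ x y, boostPart (R x y) = 0) :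
    IsCurv (soE n) ((R.compl₁₂ embL embL).compr₂ rotPart) := by
  refine ⟨fun U V => hR.map_swap rotPart _ _, fun U V => rotPart_mem_soE (hR.2.1 _ _),
    fun U V W => ?_⟩
  simpa only [hR.scalarPart_embL_embL_eq_zero ha, zero_smul, zero_add, LinearMap.compr₂_apply,
    LinearMap.compl₁₂_apply] using (hR.bianchi_embL U V W).2

theorem translations_eq_top_of_scalarPart_ne_zero (hg : IsLieSub g) (hgp : g ⊆ coRp n)
    (hR : IsCurv g R) (ha : ∀ x y, boostPart (R x y) = 0)
    (hpq : scalarPart (R (pvec n) (qvec n)) ≠ 0) : translations hg = ⊤ := by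
  have hR' := hR.mono hgp
  refine (Submodule.eq_top_iff').2 fun U => ?_
  have h := transPart_mem_translations hg hgp (hR.2.1 _ _)
    (hR'.scalarPart_pvec_embL_eq_zero ha U) (ha _ _) (hR'.rotPart_pvec_embL_eq_zero ha U)
  rw [hR'.transPart_pvec_embL, hR'.rotPart_pvec_qvec_eq_zero ha, LinearMap.zero_apply, add_zero,
    Submodule.neg_mem_iff, Submodule.smul_mem_iff _ hpq] at h
  exact h

theorem IsCurv.rotPart_embL_eq_zero_of_mem_orthogonal (hg : IsLieSub g) (hgp : g ⊆ coRp n)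
    (hR : IsCurv g R) (ha : ∀ x y, boostPart (R x y) = 0) {U v : Fin n → ℝ}
    (hU : U ∈ (dotE n).orthogonal (translations hg)) (hv : v ∈ translations hg) :
    rotPart (R (embL U) (embL v)) = 0 := by
  refine LinearMap.ext fun W => dotE_nondegenerate.1 _ fun Z => ?_
  rw [show dotE n (rotPart (R (embL U) (embL v)) W) Z =
      dotE n (rotPart (R (embL W) (embL Z)) U) v from
    ((hR.mono hgp).isCurv_soE ha).pair_symm dotE_isSymm U v W Z,
    apply_swap_of_mem_soSet dotE_isSymm (rotPart_mem_soE (hgp (hR.2.1 _ _))),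
    hU _ (rotPart_mem_translations hg hgp (hR.2.1 _ _) hv), neg_zero]

theorem translations_eq_top_of_transPart_ne_zero (hg : IsLieSub g) (hgp : g ⊆ coRp n)
    (hR : IsCurv g R) (ha : ∀ x y, boostPart (R x y) = 0)
    (hpq : scalarPart (R (pvec n) (qvec n)) = 0) (hX : transPart (R (pvec n) (qvec n)) ≠ 0) :
    translations hg = ⊤ := by
  have hR' := hR.mono hgp
  set v := transPart (R (pvec n) (qvec n)) with hvdef
  have hscalar : ∀ U, scalarPart (R (embL U) (qvec n)) = dotE n v U := fun U => by
    rw [hvdef, hR'.dotE_transPart_pvec_qvec, ha, add_zero]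
  have hv : v ∈ translations hg :=
    transPart_mem_translations hg hgp (hR.2.1 _ _) hpq (ha _ _) (hR'.rotPart_pvec_qvec_eq_zero ha)
  refine eq_top_of_dotE_orthogonal_eq_bot ((Submodule.eq_bot_iff _).2 fun U hU => ?_)
  have horth : ∀ Y ∈ translations hg, dotE n Y U = 0 := hU
  have hUv := horth _ <| transPart_mem_translations hg hgp (hR.2.1 _ _)
    (hR'.scalarPart_embL_embL_eq_zero ha U v) (ha _ _)
    (hR.rotPart_embL_eq_zero_of_mem_orthogonal hg hgp ha hU hv)
  rw [hR'.transPart_embL_embL, hscalar, hscalar, horth v hv, zero_smul, zero_add] at hUv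
  simp only [map_add, map_sub, map_smul, LinearMap.add_apply, LinearMap.sub_apply,
    LinearMap.smul_apply, smul_eq_mul,
    apply_self_of_mem_soSet dotE_isSymm (rotPart_mem_soE (hgp (hR.2.1 _ _))),
    horth _ (rotPart_mem_translations hg hgp (hR.2.1 _ _) hv), add_zero, sub_zero] at hUv
  exact dotE_self_eq_zero.1 ((mul_eq_zero.1 hUv).resolve_left (dotE_self_eq_zero.not.2 hX))

theorem exists_isCurv_scalarPart_ne_zero (hgp : g ⊆ coRp n) (hB : IsBerger g)
    (hnot : ¬ g ⊆ soSet (minkB n)) : ∃ R, IsCurv g R ∧ ∃ x y, scalarPart (R x y) ≠ 0 := by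
  by_contra! hzero
  refine hnot fun F hF => mem_soSet_minkB_of_scalarPart_eq_zero (hgp hF) ?_
  exact hB.subset_of_isCurv (S := LinearMap.ker scalarPart) hzero hF

theorem translations_eq_top_of_boostPart_eq_zero (hg : IsLieSub g) (hgp : g ⊆ coRp n)
    (hB : IsBerger g) (hnot : ¬ g ⊆ soSet (minkB n)) (ha : ∀ F ∈ g, boostPart F = 0) :
    translations hg = ⊤ := by
  obtain ⟨R, hR, x, y, hxy⟩ := exists_isCurv_scalarPart_ne_zero hgp hB hnot
  have hR' := hR.mono hgp
  have haR : ∀ x y, boostPart (R x y) = 0 := fun x y => ha _ (hR.2.1 x y)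
  by_cases hpq : scalarPart (R (pvec n) (qvec n)) = 0
  · refine translations_eq_top_of_transPart_ne_zero hg hgp hR haR hpq fun hX => hxy ?_
    refine hR.mem_of_witt (S := ⊥) hpq (hR'.scalarPart_pvec_embL_eq_zero haR) (fun U => ?_)
      (hR'.scalarPart_embL_embL_eq_zero haR) x y
    have hU := hR'.dotE_transPart_pvec_qvec U
    rwa [hX, haR, add_zero, map_zero, LinearMap.zero_apply, eq_comm] at hU
  · exact translations_eq_top_of_scalarPart_ne_zero hg hgp hR haR hpq

end BoostFree

section TraceForm

variable {n : ℕ} {A : Module.End ℝ (Fin n → ℝ)}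

theorem trace_mul_self_eq_neg_sum (hA : A ∈ soE n) : LinearMap.trace ℝ _ (A * A) =
    -∑ i, dotE n (A (Pi.single i 1)) (A (Pi.single i 1)) := by
  rw [LinearMap.trace_eq_matrix_trace ℝ (Pi.basisFun ℝ (Fin n)), Matrix.trace,
    ← Finset.sum_neg_distrib]
  refine Finset.sum_congr rfl fun i _ => ?_
  rw [← apply_left_of_mem_soSet hA, Matrix.diag_apply, LinearMap.toMatrix_apply]
  simp [dotE, Pi.single_apply]

theorem trace_mul_self_nonpos (hA : A ∈ soE n) : LinearMap.trace ℝ _ (A * A) ≤ 0 := by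
  rw [trace_mul_self_eq_neg_sum hA, neg_nonpos]
  exact Finset.sum_nonneg fun i _ => dotE_self_nonneg _

theorem eq_zero_of_trace_mul_self_eq_zero (hA : A ∈ soE n)
    (h : LinearMap.trace ℝ _ (A * A) = 0) : A = 0 := by
  rw [trace_mul_self_eq_neg_sum hA, neg_eq_zero,
    Finset.sum_eq_zero_iff_of_nonneg fun i _ => dotE_self_nonneg _] at h
  refine (Pi.basisFun ℝ (Fin n)).ext fun i => ?_
  simpa only [Pi.basisFun_apply, LinearMap.zero_apply] using
    dotE_self_eq_zero.1 (h i (Finset.mem_univ i))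

/-- The invariant form `a a' - tr (A A')` on `ℝ ⊕ 𝔤𝔩(n)`; it is positive definite on
`ℝ ⊕ 𝔰𝔬(n)`. -/
def boostTraceForm (n : ℕ) : LinearMap.BilinForm ℝ (ℝ × Module.End ℝ (Fin n → ℝ)) :=
  LinearMap.mk₂ ℝ (fun x y => x.1 * y.1 - LinearMap.trace ℝ _ (x.2 * y.2))
    (fun x x' y => by simp only [Prod.fst_add, Prod.snd_add, add_mul, map_add]; ring)
    (fun c x y => by
      simp only [Prod.smul_fst, Prod.smul_snd, smul_mul_assoc, map_smul, smul_eq_mul]; ring)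
    (fun x y y' => by simp only [Prod.fst_add, Prod.snd_add, mul_add, map_add]; ring)
    (fun c x y => by
      simp only [Prod.smul_fst, Prod.smul_snd, mul_smul_comm, map_smul, smul_eq_mul]; ring)

theorem boostTraceForm_apply (x y : ℝ × Module.End ℝ (Fin n → ℝ)) :
    boostTraceForm n x y = x.1 * y.1 - LinearMap.trace ℝ _ (x.2 * y.2) := rfl

theorem boostTraceForm_isSymm : (boostTraceForm n).IsSymm :=
  ⟨fun x y => by
    rw [boostTraceForm_apply, boostTraceForm_apply, LinearMap.trace_mul_comm, mul_comm x.1]⟩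

theorem eq_zero_of_boostTraceForm_self_eq_zero {x : ℝ × Module.End ℝ (Fin n → ℝ)}
    (hx : x.2 ∈ soE n) (h : boostTraceForm n x x = 0) : x = 0 := by
  rw [boostTraceForm_apply] at h
  have htr := trace_mul_self_nonpos hx
  have hsq := mul_self_nonneg x.1
  exact Prod.ext (mul_self_eq_zero.1 (by linarith))
    (eq_zero_of_trace_mul_self_eq_zero hx (by linarith))

-- The element `z` representing the linear form `(a, A) ↦ a` works, as the form is invariant.
theorem exists_fst_ne_zero_forall_commute {S : Submodule ℝ (ℝ × Module.End ℝ (Fin n → ℝ))}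
    (hskew : ∀ x ∈ S, x.2 ∈ soE n)
    (hlie : ∀ x ∈ S, ∀ y ∈ S, ((0 : ℝ), x.2 * y.2 - y.2 * x.2) ∈ S)
    (hne : ∃ x ∈ S, x.1 ≠ 0) : ∃ z ∈ S, z.1 ≠ 0 ∧ ∀ x ∈ S, Commute z.2 x.2 := by
  obtain ⟨z, hz, hrep⟩ := exists_mem_forall_mem_apply_eq_of_anisotropic boostTraceForm_isSymm
    (fun x hx => eq_zero_of_boostTraceForm_self_eq_zero (hskew x hx)) (LinearMap.fst ℝ ℝ _)
  simp only [boostTraceForm_apply, LinearMap.fst_apply] at hrep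
  refine ⟨z, hz, fun hz0 => ?_, fun x hx => sub_eq_zero.1 ?_⟩
  · obtain ⟨x, hx, hx0⟩ := hne
    have hzz : z = 0 := eq_zero_of_boostTraceForm_self_eq_zero (hskew z hz) (by
      rw [boostTraceForm_apply, hrep z hz, hz0])
    exact hx0 (by simpa [hzz] using (hrep x hx).symm)
  · have hbr := hlie z hz x hx
    have h := hrep _ (hlie x hx _ hbr)
    simp only [mul_zero, zero_sub, neg_eq_zero] at h
    exact eq_zero_of_trace_mul_self_eq_zero (hskew _ hbr) (by rwa [trace_mul_bracket] at h)

end TraceForm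

section BoostNonzero

variable {n : ℕ} {g : Set (Module.End ℝ (Mink n))}

theorem exists_boostPart_ne_zero_forall_commute (hg : IsLieSub g) (hgp : g ⊆ coRp n)
    (ha : ∃ F ∈ g, boostPart F ≠ 0) :
    ∃ z ∈ g, boostPart z ≠ 0 ∧ ∀ F ∈ g, Commute (rotPart z) (rotPart F) := by
  obtain ⟨_, ⟨z, hz, rfl⟩, hz0, hcomm⟩ := exists_fst_ne_zero_forall_commute
    (S := hg.toSubmodule.map (boostPart.prod rotPart))
    (by rintro _ ⟨F, hF, rfl⟩; exact rotPart_mem_soE (hgp hF))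
    (by
      rintro _ ⟨F, hF, rfl⟩ _ ⟨G, hG, rfl⟩
      refine ⟨_, hg.bracket_mem hF hG, Prod.ext ?_ ?_⟩
      · exact (congrArg boostPart (bracket_eq_coElem (hgp hF) (hgp hG))).trans (by simp)
      · exact (congrArg rotPart (bracket_eq_coElem (hgp hF) (hgp hG))).trans (by simp))
    (by
      obtain ⟨F, hF, hF0⟩ := ha
      exact ⟨_, ⟨F, hF, rfl⟩, hF0⟩)
  exact ⟨z, hz, hz0, fun F hF => hcomm _ ⟨F, hF, rfl⟩⟩

-- Bracketing with an element `z` that is central modulo translations and has `a ≠ 0`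
-- acts invertibly on translations, which trivializes the cocycle `F ↦ X_F` modulo `N`.
theorem exists_transPart_sub_mem_translations (hg : IsLieSub g) (hgp : g ⊆ coRp n)
    (ha : ∃ F ∈ g, boostPart F ≠ 0) : ∃ Y : Fin n → ℝ, ∀ F ∈ g,
      transPart F - (boostPart F • Y + rotPart F Y) ∈ translations hg := by
  obtain ⟨z, hz, hz0, hcomm⟩ := exists_boostPart_ne_zero_forall_commute hg hgp ha
  have hinj := injective_smul_one_add_of_mem_soE hz0 (rotPart_mem_soE (hgp hz))
  obtain ⟨Y, hY⟩ := LinearMap.surjective_of_injective hinj (transPart z)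
  refine ⟨Y, fun F hF => mem_of_apply_mem_of_injective hinj
    (fun X hX => smul_add_rotPart_mem_translations hg hgp hz hX) ?_⟩
  have hbr := transPart_mem_translations hg hgp (hg.bracket_mem hz hF)
  have hzF := LinearMap.congr_fun (hcomm F hF).eq Y
  rw [bracket_eq_coElem (hgp hz) (hgp hF), scalarPart_coElem, boostPart_coElem, rotPart_coElem,
    transPart_coElem, ← hY] at hbr
  convert hbr rfl rfl (sub_eq_zero.2 (hcomm F hF).eq) using 1
  simp only [LinearMap.add_apply, LinearMap.smul_apply, Module.End.one_apply, map_sub, map_add,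
    map_smul, Module.End.mul_apply] at hzF ⊢
  linear_combination (exp := 1) -hzF

/-- The embedding `U ↦ U - (Y,U)·p` of `ℝⁿ` into Minkowski space. -/
def shiftedEmb (Y : Fin n → ℝ) : (Fin n → ℝ) →ₗ[ℝ] Mink n :=
  embL - (dotE n Y).smulRight (pvec n)

theorem shiftedEmb_apply (Y U : Fin n → ℝ) : shiftedEmb Y U = (-dotE n Y U, U, 0) := by
  simp [shiftedEmb, embL_apply, pvec]

theorem isNondegOn_map_shiftedEmb (Y : Fin n → ℝ) (W : Submodule ℝ (Fin n → ℝ)) :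
    IsNondegOn (minkB n) (W.map (shiftedEmb Y)) := by
  rintro _ ⟨U, hU, rfl⟩ h
  have hUU := h _ ⟨U, hU, rfl⟩
  simp only [shiftedEmb_apply, minkB_apply, mul_zero, zero_mul, zero_add] at hUU
  rw [dotE_self_eq_zero.1 hUU, map_zero]

theorem map_shiftedEmb_ne_top (Y : Fin n → ℝ) (W : Submodule ℝ (Fin n → ℝ)) :
    W.map (shiftedEmb Y) ≠ ⊤ := fun h => by
  obtain ⟨U, -, hU⟩ : qvec n ∈ W.map (shiftedEmb Y) := h ▸ Submodule.mem_top
  rw [shiftedEmb_apply] at hU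
  exact zero_ne_one (congrArg (fun w : Mink n => w.2.2) hU)

theorem invariant_map_shiftedEmb (hg : IsLieSub g) (hgp : g ⊆ coRp n) {Y : Fin n → ℝ}
    (hY : ∀ F ∈ g, transPart F - (boostPart F • Y + rotPart F Y) ∈ translations hg) :
    Invariant g (((dotE n).orthogonal (translations hg)).map (shiftedEmb Y)) := by
  rintro F hF _ ⟨U, hU, rfl⟩
  refine ⟨scalarPart F • U + rotPart F U, Submodule.add_mem _ (Submodule.smul_mem _ _ hU)
    (apply_mem_dotE_orthogonal (rotPart_mem_soE (hgp hF))
      (fun X => rotPart_mem_translations hg hgp hF) hU), ?_⟩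
  have horth : dotE n (transPart F - (boostPart F • Y + rotPart F Y)) U = 0 := hU _ (hY F hF)
  rw [map_sub, map_add, map_smul, LinearMap.sub_apply, LinearMap.add_apply, LinearMap.smul_apply,
    smul_eq_mul, apply_left_of_mem_soSet (rotPart_mem_soE (hgp hF))] at horth
  rw [shiftedEmb_apply, shiftedEmb_apply, apply_of_mem_coRp (hgp hF)]
  simp only [map_add, map_smul, smul_eq_mul, zero_smul, sub_zero, mul_zero, Prod.mk.injEq,
    and_true]
  linarith

theorem translations_eq_top_of_boostPart_ne_zero (hg : IsLieSub g) (hgp : g ⊆ coRp n)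
    (hwi : WeaklyIrred (minkB n) g) (ha : ∃ F ∈ g, boostPart F ≠ 0) : translations hg = ⊤ := by
  obtain ⟨Y, hY⟩ := exists_transPart_sub_mem_translations hg hgp ha
  have hbot := (hwi _ (invariant_map_shiftedEmb hg hgp hY)
    (isNondegOn_map_shiftedEmb Y _)).resolve_right (map_shiftedEmb_ne_top Y _)
  refine eq_top_of_dotE_orthogonal_eq_bot ((Submodule.eq_bot_iff _).2 fun U hU => ?_)
  have hU0 : shiftedEmb Y U ∈ (⊥ : Submodule ℝ (Mink n)) := hbot ▸ ⟨U, hU, rfl⟩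
  rw [Submodule.mem_bot, shiftedEmb_apply] at hU0
  exact congrArg (fun w : Mink n => w.2.1) hU0

theorem translations_eq_top (hg : IsLieSub g) (hgp : g ⊆ coRp n) (hB : IsBerger g)
    (hnot : ¬ g ⊆ soSet (minkB n)) (hwi : WeaklyIrred (minkB n) g) : translations hg = ⊤ := by
  by_cases ha : ∀ F ∈ g, boostPart F = 0
  · exact translations_eq_top_of_boostPart_eq_zero hg hgp hB hnot ha
  · exact translations_eq_top_of_boostPart_ne_zero hg hgp hwi (by simpa using ha)

end BoostNonzero

section StandardForms

variable {n : ℕ} {g : Set (Module.End ℝ (Mink n))}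

/-- `g` is one of the six standard subalgebras of `co(1,n+1)_{ℝp}` attached to `h ⊆ so(n)`:
`ℝ·id ⊕ 𝔤^{1,𝔥}`, `ℝ·id ⊕ 𝔤^{2,𝔥}`, `ℝ·id ⊕ 𝔤^{3,𝔥,φ}`, `𝔤^{α,θ,1,𝔥}`, `𝔤^{θ,2,𝔥}` or
`𝔤^{θ,3,𝔥,φ}`. -/
def IsStandard (h : Set (Module.End ℝ (Fin n → ℝ))) (g : Set (Module.End ℝ (Mink n))) : Prop :=
  g = G1 n h ∨
  g = G2 n h ∨
  (∃ φ, VanishOnComm h φ ∧ NonzeroOn h φ ∧ g = G3 n h φ) ∨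
  (∃ α θ, VanishOnComm h θ ∧ ¬ (α = 0 ∧ ∀ A ∈ h, θ A = 0) ∧ g = G4 n h α θ) ∨
  (∃ θ, VanishOnComm h θ ∧ NonzeroOn h θ ∧ g = G5 n h θ) ∨
  (∃ θ φ, VanishOnComm h θ ∧ VanishOnComm h φ ∧ NonzeroOn h θ ∧ NonzeroOn h φ ∧
    g = G6 n h θ φ)

theorem exists_vanishOnComm_eq_comp (hg : IsLieSub g) (hgp : g ⊆ coRp n)
    (L : Dual ℝ (Module.End ℝ (Mink n))) (hL : ∀ A X, L (coElem 0 0 A X) = 0)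
    (h : ∀ F ∈ g, rotPart F = 0 → L F = 0) :
    ∃ θ, VanishOnComm (rotPart '' g) θ ∧ ∀ F ∈ g, L F = θ (rotPart F) := by
  obtain ⟨θ, hθ⟩ := exists_dual_eq_comp_on hg.toSubmodule L rotPart h
  refine ⟨θ, ?_, hθ⟩
  rintro _ ⟨F, hF, rfl⟩ _ ⟨G, hG, rfl⟩
  have hbr := hθ _ (hg.bracket_mem hF hG)
  rwa [bracket_eq_coElem (hgp hF) (hgp hG), hL, rotPart_coElem, eq_comm] at hbr

theorem exists_vanishOnComm_boostPart_eq (hg : IsLieSub g) (hgp : g ⊆ coRp n)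
    (h : ∀ F ∈ g, rotPart F = 0 → boostPart F = 0) :
    ∃ φ, VanishOnComm (rotPart '' g) φ ∧ (φ = 0 ∨ NonzeroOn (rotPart '' g) φ) ∧
      ∀ F ∈ g, boostPart F = φ (rotPart F) := by
  obtain ⟨φ, hφ, hgφ⟩ := exists_vanishOnComm_eq_comp hg hgp boostPart (by simp) h
  by_cases hne : NonzeroOn (rotPart '' g) φ
  · exact ⟨φ, hφ, Or.inr hne, hgφ⟩
  · refine ⟨0, fun _ _ _ _ => rfl, Or.inl rfl, fun F hF => (hgφ F hF).trans ?_⟩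
    exact not_not.1 fun hF0 => hne ⟨_, ⟨F, hF, rfl⟩, hF0⟩

theorem one_eq_coElem : (1 : Module.End ℝ (Mink n)) = coElem 1 0 0 0 :=
  LinearMap.ext fun w => by simp [coElem_apply]

theorem coElem_mem_of_one_mem (hg : IsLieSub g) (h1 : (1 : Module.End ℝ (Mink n)) ∈ g)
    {b a : ℝ} {A : Module.End ℝ (Fin n → ℝ)} {X : Fin n → ℝ} (h : coElem b a A X ∈ g) (b' : ℝ) :
    coElem b' a A X ∈ g := by
  have hsum := hg.2.1 _ h _ (hg.2.2.1 (b' - b) _ h1)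
  rw [one_eq_coElem, smul_coElem, coElem_add] at hsum
  simpa using hsum

theorem coElem_mem_of_translations_eq_top (hg : IsLieSub g) (hgp : g ⊆ coRp n)
    (hN : translations hg = ⊤) {F : Module.End ℝ (Mink n)} (hF : F ∈ g) (X : Fin n → ℝ) :
    coElem (scalarPart F) (boostPart F) (rotPart F) X ∈ g := by
  have htrans : coElem 0 0 0 (X - transPart F) ∈ g :=
    show X - transPart F ∈ translations hg from hN ▸ Submodule.mem_top
  have hsum := hg.2.1 _ hF _ htrans
  rw [eq_coElem_of_mem_coRp (hgp hF), coElem_add] at hsum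
  simpa using hsum

theorem coElem_mem_of_rotPart_eq_zero (hg : IsLieSub g) (hgp : g ⊆ coRp n)
    (hN : translations hg = ⊤) {F₀ : Module.End ℝ (Mink n)} (hF₀ : F₀ ∈ g) (hA : rotPart F₀ = 0)
    (ha : boostPart F₀ ≠ 0) {F : Module.End ℝ (Mink n)} (hF : F ∈ g) (a : ℝ) (X : Fin n → ℝ) :
    coElem (scalarPart F + (a - boostPart F) / boostPart F₀ * scalarPart F₀) a (rotPart F) X
      ∈ g := by
  have hsum := hg.2.1 _ hF _ (hg.2.2.1 ((a - boostPart F) / boostPart F₀) _ hF₀)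
  simpa [hA, div_mul_cancel₀ _ ha] using coElem_mem_of_translations_eq_top hg hgp hN hsum X

theorem scalarPart_eq_zero_of_one_notMem (hg : IsLieSub g) (hgp : g ⊆ coRp n)
    (hN : translations hg = ⊤) (h1 : (1 : Module.End ℝ (Mink n)) ∉ g)
    {F : Module.End ℝ (Mink n)} (hF : F ∈ g) (ha : boostPart F = 0) (hA : rotPart F = 0) :
    scalarPart F = 0 := by
  by_contra hb
  have hmem := hg.2.2.1 (scalarPart F)⁻¹ _ (coElem_mem_of_translations_eq_top hg hgp hN hF 0)
  rw [ha, hA, smul_coElem, inv_mul_cancel₀ hb, mul_zero, smul_zero, smul_zero,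
    ← one_eq_coElem] at hmem
  exact h1 hmem

theorem eq_G1 (hg : IsLieSub g) (hgp : g ⊆ coRp n) (hN : translations hg = ⊤)
    (h1 : (1 : Module.End ℝ (Mink n)) ∈ g) {F₀ : Module.End ℝ (Mink n)} (hF₀ : F₀ ∈ g)
    (hA : rotPart F₀ = 0) (ha : boostPart F₀ ≠ 0) : g = G1 n (rotPart '' g) := by
  refine Set.Subset.antisymm
    (fun F hF => ⟨_, _, _, ⟨F, hF, rfl⟩, _, eq_coElem_of_mem_coRp (hgp hF)⟩) ?_
  rintro _ ⟨b, a, _, ⟨F, hF, rfl⟩, X, rfl⟩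
  exact coElem_mem_of_one_mem hg h1
    (coElem_mem_of_rotPart_eq_zero hg hgp hN hF₀ hA ha hF a X) b

theorem eq_G3 (hg : IsLieSub g) (hgp : g ⊆ coRp n) (hN : translations hg = ⊤)
    (h1 : (1 : Module.End ℝ (Mink n)) ∈ g) {φ : Dual ℝ (Module.End ℝ (Fin n → ℝ))}
    (hφ : ∀ F ∈ g, boostPart F = φ (rotPart F)) : g = G3 n (rotPart '' g) φ := by
  refine Set.Subset.antisymm (fun F hF => ⟨scalarPart F, _, ⟨F, hF, rfl⟩, transPart F, ?_⟩) ?_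
  · rw [← hφ F hF]
    exact eq_coElem_of_mem_coRp (hgp hF)
  · rintro _ ⟨b, _, ⟨F, hF, rfl⟩, X, rfl⟩
    rw [← hφ F hF]
    exact coElem_mem_of_one_mem hg h1 (coElem_mem_of_translations_eq_top hg hgp hN hF X) b

theorem eq_G4 (hg : IsLieSub g) (hgp : g ⊆ coRp n) (hN : translations hg = ⊤) {α : ℝ}
    {θ : Dual ℝ (Module.End ℝ (Fin n → ℝ))}
    (hθ : ∀ F ∈ g, scalarPart F = α * boostPart F + θ (rotPart F)) {F₀ : Module.End ℝ (Mink n)}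
    (hF₀ : F₀ ∈ g) (hA : rotPart F₀ = 0) (ha : boostPart F₀ ≠ 0) :
    g = G4 n (rotPart '' g) α θ := by
  refine Set.Subset.antisymm (fun F hF => ⟨boostPart F, _, ⟨F, hF, rfl⟩, transPart F, ?_⟩) ?_
  · rw [← hθ F hF]
    exact eq_coElem_of_mem_coRp (hgp hF)
  · rintro _ ⟨a, _, ⟨F, hF, rfl⟩, X, rfl⟩
    have hmem := coElem_mem_of_rotPart_eq_zero hg hgp hN hF₀ hA ha hF a X
    rw [hθ F hF, hθ F₀ hF₀, hA, map_zero] at hmem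
    convert hmem using 2
    field_simp
    ring

theorem eq_G6 (hg : IsLieSub g) (hgp : g ⊆ coRp n) (hN : translations hg = ⊤)
    {θ φ : Dual ℝ (Module.End ℝ (Fin n → ℝ))} (hθ : ∀ F ∈ g, scalarPart F = θ (rotPart F))
    (hφ : ∀ F ∈ g, boostPart F = φ (rotPart F)) : g = G6 n (rotPart '' g) θ φ := by
  refine Set.Subset.antisymm (fun F hF => ⟨_, ⟨F, hF, rfl⟩, transPart F, ?_⟩) ?_
  · rw [← hθ F hF, ← hφ F hF]
    exact eq_coElem_of_mem_coRp (hgp hF)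
  · rintro _ ⟨_, ⟨F, hF, rfl⟩, X, rfl⟩
    rw [← hθ F hF, ← hφ F hF]
    exact coElem_mem_of_translations_eq_top hg hgp hN hF X

theorem isStandard_of_one_mem (hg : IsLieSub g) (hgp : g ⊆ coRp n) (hN : translations hg = ⊤)
    (h1 : (1 : Module.End ℝ (Mink n)) ∈ g) : IsStandard (rotPart '' g) g := by
  by_cases hboost : ∀ F ∈ g, rotPart F = 0 → boostPart F = 0
  · obtain ⟨φ, hφ, rfl | hφ0, hgφ⟩ := exists_vanishOnComm_boostPart_eq hg hgp hboost
    · exact Or.inr (Or.inl (eq_G3 hg hgp hN h1 hgφ))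
    · exact Or.inr (Or.inr (Or.inl ⟨φ, hφ, hφ0, eq_G3 hg hgp hN h1 hgφ⟩))
  · push Not at hboost
    obtain ⟨F₀, hF₀, hA, ha⟩ := hboost
    exact Or.inl (eq_G1 hg hgp hN h1 hF₀ hA ha)

theorem exists_vanishOnComm_scalarPart_eq (hg : IsLieSub g) (hgp : g ⊆ coRp n)
    (hb : ∀ F ∈ g, boostPart F = 0 → rotPart F = 0 → scalarPart F = 0)
    {F₀ : Module.End ℝ (Mink n)} (hF₀ : F₀ ∈ g) (hA : rotPart F₀ = 0) (ha : boostPart F₀ ≠ 0) :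
    ∃ α θ, VanishOnComm (rotPart '' g) θ ∧
      ∀ F ∈ g, scalarPart F = α * boostPart F + θ (rotPart F) := by
  obtain ⟨θ, hθ, hgθ⟩ := exists_vanishOnComm_eq_comp hg hgp
    (scalarPart - (scalarPart F₀ / boostPart F₀) • boostPart) (by simp) (fun F hF hF0 => by
      have hsum := hb _ (hg.2.1 _ hF _ (hg.2.2.1 (-(boostPart F / boostPart F₀)) _ hF₀))
        (by simp [ha]) (by simp [hF0, hA])
      simp only [map_add, map_smul, smul_eq_mul, LinearMap.sub_apply, LinearMap.smul_apply]
        at hsum ⊢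
      linear_combination hsum)
  exact ⟨_, θ, hθ, fun F hF => sub_eq_iff_eq_add'.1 (hgθ F hF)⟩

theorem isStandard_of_one_notMem (hg : IsLieSub g) (hgp : g ⊆ coRp n)
    (hnot : ¬ g ⊆ soSet (minkB n)) (hN : translations hg = ⊤)
    (h1 : (1 : Module.End ℝ (Mink n)) ∉ g) : IsStandard (rotPart '' g) g := by
  obtain ⟨G, hG, hGso⟩ := Set.not_subset.1 hnot
  have hGb : scalarPart G ≠ 0 := fun h => hGso (mem_soSet_minkB_of_scalarPart_eq_zero (hgp hG) h)
  have hb := fun F hF => scalarPart_eq_zero_of_one_notMem hg hgp hN h1 (F := F) hF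
  by_cases hboost : ∀ F ∈ g, rotPart F = 0 → boostPart F = 0
  · obtain ⟨θ, hθ, hgθ⟩ := exists_vanishOnComm_eq_comp hg hgp scalarPart (by simp)
      fun F hF hA => hb F hF (hboost F hF hA) hA
    have hθ0 : NonzeroOn (rotPart '' g) θ := ⟨_, ⟨G, hG, rfl⟩, hgθ G hG ▸ hGb⟩
    obtain ⟨φ, hφ, rfl | hφ0, hgφ⟩ := exists_vanishOnComm_boostPart_eq hg hgp hboost
    · exact Or.inr (Or.inr (Or.inr (Or.inr (Or.inl ⟨θ, hθ, hθ0, eq_G6 hg hgp hN hgθ hgφ⟩))))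
    · exact Or.inr (Or.inr (Or.inr (Or.inr (Or.inr
        ⟨θ, φ, hθ, hφ, hθ0, hφ0, eq_G6 hg hgp hN hgθ hgφ⟩))))
  · push Not at hboost
    obtain ⟨F₀, hF₀, hA, ha⟩ := hboost
    obtain ⟨α, θ, hθ, hgθ⟩ := exists_vanishOnComm_scalarPart_eq hg hgp hb hF₀ hA ha
    refine Or.inr (Or.inr (Or.inr (Or.inl
      ⟨α, θ, hθ, ?_, eq_G4 hg hgp hN hgθ hF₀ hA ha⟩)))
    rintro ⟨hα, hθ0⟩
    exact hGb (by rw [hgθ G hG, hα, hθ0 _ ⟨G, hG, rfl⟩, zero_mul, add_zero])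

theorem isStandard_rotPart_image (hg : IsLieSub g) (hgp : g ⊆ coRp n) (hB : IsBerger g)
    (hnot : ¬ g ⊆ soSet (minkB n)) (hwi : WeaklyIrred (minkB n) g) :
    IsStandard (rotPart '' g) g := by
  have hN := translations_eq_top hg hgp hB hnot hwi
  by_cases h1 : (1 : Module.End ℝ (Mink n)) ∈ g
  · exact isStandard_of_one_mem hg hgp hN h1
  · exact isStandard_of_one_notMem hg hgp hnot hN h1

end StandardForms

section IsotropicLine

variable {n : ℕ}

theorem eq_smul_pvec_of_isotropic {w : Mink n} (hp : minkB n w (pvec n) = 0)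
    (hw : minkB n w w = 0) : w = w.1 • pvec n := by
  have hu : w.2.2 = 0 := by simpa [minkB_apply, pvec] using hp
  have hx : w.2.1 = 0 := dotE_self_eq_zero.1 (by simpa [minkB_apply, hu] using hw)
  exact Prod.ext (by simp [pvec]) (Prod.ext (by simp [pvec, hx]) (by simp [pvec, hu]))

theorem exists_eq_coElem_of_mem_soSet {S : Module.End ℝ (Mink n)} (hS : S ∈ soSet (minkB n)) {a : ℝ}
    (hp : S (pvec n) = a • pvec n) :
    ∃ A ∈ soE n, S = coElem 0 a A (-(S (qvec n)).2.1) := by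
  have hembq : ∀ U, (S (embL U)).2.2 = 0 := fun U => by
    have h := hS (embL U) (pvec n)
    rw [hp] at h
    simpa [minkB_apply, pvec, embL_apply] using h
  have hembp : ∀ U, (S (embL U)).1 = -dotE n (S (qvec n)).2.1 U := fun U => by
    have h := hS (embL U) (qvec n)
    rw [minkB_apply, minkB_apply] at h
    rw [dotE_isSymm.eq, eq_neg_iff_add_eq_zero]
    simpa [qvec, embL_apply] using h
  have hqq : (S (qvec n)).2.2 = -a := by
    have h := hS (qvec n) (pvec n)
    rw [hp] at h
    exact eq_neg_of_add_eq_zero_left (by simpa [minkB_apply, pvec, qvec] using h)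
  have hqp : (S (qvec n)).1 = 0 := by
    simpa [minkB_apply, qvec] using apply_self_of_mem_soSet minkB_isSymm hS (qvec n)
  refine ⟨LinearMap.fst ℝ _ _ ∘ₗ LinearMap.snd ℝ _ _ ∘ₗ S ∘ₗ embL, fun U V => ?_,
    LinearMap.ext fun w => ?_⟩
  · simpa [minkB_apply, embL_apply] using hS (embL U) (embL V)
  · conv_lhs => rw [← witt_decomposition w, map_add, map_add, map_smul, map_smul, hp]
    refine Prod.ext ?_ (Prod.ext ?_ ?_) <;>
      simp [coElem_apply, hembp, hembq, hqq, hqp, pvec, mul_comm]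

theorem mem_coRp_of_apply_pvec {F : Module.End ℝ (Mink n)} (hF : F ∈ coSet (minkB n)) {l : ℝ}
    (hp : F (pvec n) = l • pvec n) : F ∈ coRp n := by
  obtain ⟨c, S, hS, rfl⟩ := hF
  have hSp : S (pvec n) = (l - c) • pvec n := by
    rw [sub_smul, ← hp]
    simp
  obtain ⟨A, hA, hSA⟩ := exists_eq_coElem_of_mem_soSet hS hSp
  rw [hSA, one_eq_coElem, smul_coElem, coElem_add]
  exact ⟨_, _, _, by simpa using hA, _, rfl⟩

/-- The orthogonal transformation sending `p` to `q + x - (x,x)/2·p` and `q` to `p`; the vectors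
`q + x - (x,x)/2·p` span the isotropic lines other than `ℝp`. -/
def swapWitt (x : Fin n → ℝ) : Mink n ≃ₗ[ℝ] Mink n where
  toFun w := (w.2.2 - dotE n x w.2.1 - w.1 * dotE n x x / 2, w.2.1 + w.1 • x, w.1)
  invFun w := (w.2.2, w.2.1 - w.2.2 • x, w.1 + dotE n x w.2.1 - w.2.2 * dotE n x x / 2)
  map_add' w w' := by
    simp only [Prod.fst_add, Prod.snd_add, map_add, Prod.mk_add_mk, Prod.mk.injEq, and_true]
    exact ⟨by ring, by module⟩
  map_smul' c w := by
    simp only [Prod.smul_fst, Prod.smul_snd, map_smul, smul_eq_mul, RingHom.id_apply, Prod.smul_mk,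
      Prod.mk.injEq, and_true]
    exact ⟨by ring, by module⟩
  left_inv w := by
    refine Prod.ext rfl (Prod.ext (add_sub_cancel_right _ _) ?_)
    simp only [map_add, map_smul, smul_eq_mul]
    ring
  right_inv w := by
    refine Prod.ext ?_ (Prod.ext (sub_add_cancel _ _) rfl)
    simp only [map_sub, map_smul, smul_eq_mul]
    ring

theorem swapWitt_apply (x : Fin n → ℝ) (w : Mink n) : swapWitt x w =
    (w.2.2 - dotE n x w.2.1 - w.1 * dotE n x x / 2, w.2.1 + w.1 • x, w.1) := rfl

theorem orthEquiv_swapWitt (x : Fin n → ℝ) : OrthEquiv n (swapWitt x) := by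
  intro w w'
  simp only [swapWitt_apply, minkB_apply, map_add, map_smul, LinearMap.add_apply,
    LinearMap.smul_apply, smul_eq_mul, dotE_isSymm.eq w.2.1 x]
  ring

theorem exists_orthEquiv_apply_pvec {w : Mink n} (hw : w ≠ 0) (h : minkB n w w = 0) :
    ∃ f, OrthEquiv n f ∧ ∃ c : ℝ, f (pvec n) = c • w := by
  by_cases hu : w.2.2 = 0
  · have hwp := eq_smul_pvec_of_isotropic (by simp [minkB_apply, pvec, hu]) h
    have hw1 : w.1 ≠ 0 := fun h1 => hw (by rw [hwp, h1, zero_smul])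
    refine ⟨LinearEquiv.refl ℝ _, fun _ _ => rfl, w.1⁻¹, ?_⟩
    rw [hwp]
    simp [pvec, hw1]
  · refine ⟨swapWitt (w.2.2⁻¹ • w.2.1), orthEquiv_swapWitt _, w.2.2⁻¹, ?_⟩
    rw [minkB_apply] at h
    refine Prod.ext ?_ (Prod.ext ?_ ?_)
    · simp only [swapWitt_apply, pvec, map_smul, LinearMap.smul_apply, map_zero, smul_eq_mul,
        Prod.smul_fst]
      field_simp
      linarith
    · simp [swapWitt_apply, pvec]
    · simp [swapWitt_apply, pvec, hu]

theorem subset_coRp_of_invariant_isotropic {g : Set (Module.End ℝ (Mink n))}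
    (hg : g ⊆ coSet (minkB n)) {K : Submodule ℝ (Mink n)} (hK : Invariant g K)
    (hiso : ∀ x ∈ K, ∀ y ∈ K, minkB n x y = 0) (hp : pvec n ∈ K) : g ⊆ coRp n := fun F hF =>
  mem_coRp_of_apply_pvec (hg hF) <| eq_smul_pvec_of_isotropic
    (hiso _ (hK F hF _ hp) _ hp) (hiso _ (hK F hF _ hp) _ (hK F hF _ hp))

theorem exists_orthEquiv_conj_preimage_subset_coRp {g : Set (Module.End ℝ (Mink n))}
    (hg : g ⊆ coSet (minkB n)) (hwi : WeaklyIrred (minkB n) g) (hirr : ¬ Irred g) :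
    ∃ f, OrthEquiv n f ∧ f.conj ⁻¹' g ⊆ coRp n := by
  obtain ⟨K, hK, hiso, hK0⟩ := exists_invariant_isotropic minkB_isSymm hg hwi hirr
  obtain ⟨w, hwK, hw0⟩ := K.exists_mem_ne_zero_of_ne_bot hK0
  obtain ⟨f, hf, c, hfp⟩ := exists_orthEquiv_apply_pvec hw0 (hiso w hwK w hwK)
  refine ⟨f, hf, subset_coRp_of_invariant_isotropic (K := K.comap f.toLinearMap) ?_ ?_ ?_ ?_⟩
  · rw [← conj_preimage_coSet hf]
    exact Set.preimage_mono hg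
  · intro F hF x hx
    have h := hK _ hF _ hx
    rwa [LinearEquiv.coe_coe, conj_apply_map] at h
  · intro x hx y hy
    rw [← hf]
    exact hiso _ hx _ hy
  · rw [Submodule.mem_comap, LinearEquiv.coe_coe, hfp]
    exact K.smul_mem c hwK

theorem eq_conjSet_iff {f : Mink n ≃ₗ[ℝ] Mink n} {g s : Set (Module.End ℝ (Mink n))} :
    g = conjSet f s ↔ f.conj ⁻¹' g = s := by
  rw [eq_comm]
  exact (f.conj.toEquiv.preimage_eq_iff_eq_image g s).trans eq_comm |>.symm

end IsotropicLine

/-- Classification of weakly irreducible, not irreducible Berger subalgebras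
`𝔤 ⊆ co(1,n+1)` with `𝔤 ⊄ so(1,n+1)`: `𝔤` is conjugate, by an orthogonal
transformation, to one of `ℝ·id ⊕ 𝔤^{1,𝔥}`, `ℝ·id ⊕ 𝔤^{2,𝔥}`,
`ℝ·id ⊕ 𝔤^{3,𝔥,φ}`, `𝔤^{α,θ,1,𝔥}`, `𝔤^{θ,2,𝔥}`, `𝔤^{θ,3,𝔥,φ}`, where
`𝔥 ⊆ so(n)` is a weak Berger algebra. -/
theorem classification_weakly_irreducible (n : ℕ)
    (g : Set (Module.End ℝ (Mink n)))
    (hsub : IsLieSub g) (hco : g ⊆ coSet (minkB n))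
    (hnot : ¬ g ⊆ soSet (minkB n)) (hB : IsBerger g)
    (hwi : WeaklyIrred (minkB n) g) (hnirr : ¬ Irred g) :
    ∃ φeq : Mink n ≃ₗ[ℝ] Mink n, OrthEquiv n φeq ∧
      ∃ h : Set (Module.End ℝ (Fin n → ℝ)),
        IsLieSub h ∧ h ⊆ soE n ∧ IsWeakBerger n h ∧
        (g = conjSet φeq (G1 n h) ∨
         g = conjSet φeq (G2 n h) ∨
         (∃ φ : Module.End ℝ (Fin n → ℝ) →ₗ[ℝ] ℝ,
            VanishOnComm h φ ∧ NonzeroOn h φ ∧ g = conjSet φeq (G3 n h φ)) ∨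
         (∃ (α : ℝ) (θ : Module.End ℝ (Fin n → ℝ) →ₗ[ℝ] ℝ),
            VanishOnComm h θ ∧ ¬ (α = 0 ∧ ∀ A ∈ h, θ A = 0) ∧
            g = conjSet φeq (G4 n h α θ)) ∨
         (∃ θ : Module.End ℝ (Fin n → ℝ) →ₗ[ℝ] ℝ,
            VanishOnComm h θ ∧ NonzeroOn h θ ∧ g = conjSet φeq (G5 n h θ)) ∨
         (∃ θ φ : Module.End ℝ (Fin n → ℝ) →ₗ[ℝ] ℝ,
            VanishOnComm h θ ∧ VanishOnComm h φ ∧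
            NonzeroOn h θ ∧ NonzeroOn h φ ∧
            g = conjSet φeq (G6 n h θ φ))) := by
  obtain ⟨f, hf, hfg⟩ := exists_orthEquiv_conj_preimage_subset_coRp hco hwi hnirr
  have hlie := hsub.conj_preimage f
  have hberger := hB.conj_preimage f
  have hnot' : ¬ f.conj ⁻¹' g ⊆ soSet (minkB n) := by
    rwa [← conj_preimage_soSet hf, f.conj.surjective.preimage_subset_preimage_iff]
  have hstd := isStandard_rotPart_image hlie hfg hberger hnot' (hwi.conj_preimage hf)
  refine ⟨f, hf, rotPart '' (f.conj ⁻¹' g), isLieSub_rotPart_image hlie hfg,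
    Set.image_subset_iff.2 fun F hF => rotPart_mem_soE (hfg hF),
    isWeakBerger_rotPart_image hlie hfg hberger, ?_⟩
  simp only [eq_conjSet_iff]
  exact hstd

end Weyl
end
end

section
/- Let k ≥ 1, n = k + 2, and consider the orthogonal decomposition ℝ^{1,n+1} = ℝ^{1,k+1} ⊕ ℝ², with e_{n−1}, e_n an orthonormal basis of the Euclidean factor ℝ². Let a ∈ ℝ be nonzero and set 𝔤 := so(1,k+1) ⊕ ℝ·(e_{n−1}∧e_n + a·id_{ℝ^{1,n+1}}) ⊆ co(1,n+1), where so(1,k+1) acts by zero on ℝ². Then every algebraic curvature tensor R ∈ ℛ(𝔤) takes values in so(1,k+1); in particular L(ℛ(𝔤)) ⊆ so(1,k+1) ⊊ 𝔤 and 𝔤 is not a Berger algebra. -/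
open Module

noncomputable section

namespace Weyl

variable {V : Type*} [AddCommGroup V] [Module ℝ V]

/-- The subspace `ℝ^{1,k+1} = span(p, e₁, …, e_k, q)` of `ℝ^{1,n+1}`, `n = k+2`. -/
def MW1 (k : ℕ) : Submodule ℝ (Mink (k + 2)) where
  carrier := {w | ∀ i : Fin (k + 2), k ≤ (i : ℕ) → w.2.1 i = 0}
  zero_mem' := fun i _ => rfl
  add_mem' := by
    intro a b ha hb i hi
    show a.2.1 i + b.2.1 i = 0
    rw [ha i hi, hb i hi]; ring
  smul_mem' := by
    intro c a ha i hi
    show c * a.2.1 i = 0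
    rw [ha i hi]; ring

/-- The Euclidean plane `ℝ² = span(e_{n−1}, e_n)`, `n = k+2`. -/
def MW2 (k : ℕ) : Submodule ℝ (Mink (k + 2)) where
  carrier := {w | w.1 = 0 ∧ w.2.2 = 0 ∧ ∀ i : Fin (k + 2), (i : ℕ) < k → w.2.1 i = 0}
  zero_mem' := ⟨rfl, rfl, fun i _ => rfl⟩
  add_mem' := by
    rintro a b ⟨ha1, ha2, ha3⟩ ⟨hb1, hb2, hb3⟩
    refine ⟨?_, ?_, fun i hi => ?_⟩
    · show a.1 + b.1 = 0
      rw [ha1, hb1]; ring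
    · show a.2.2 + b.2.2 = 0
      rw [ha2, hb2]; ring
    · show a.2.1 i + b.2.1 i = 0
      rw [ha3 i hi, hb3 i hi]; ring
  smul_mem' := by
    rintro c a ⟨ha1, ha2, ha3⟩
    refine ⟨?_, ?_, fun i hi => ?_⟩
    · show c * a.1 = 0
      rw [ha1]; ring
    · show c * a.2.2 = 0
      rw [ha2]; ring
    · show c * a.2.1 i = 0
      rw [ha3 i hi]; ring

/-- `so(1,k+1)`: skew endomorphisms of `ℝ^{1,n+1}` preserving `ℝ^{1,k+1}` and
acting by zero on the Euclidean plane `ℝ²`. -/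
def so1 (k : ℕ) : Set (Module.End ℝ (Mink (k + 2))) :=
  {S | S ∈ soSet (minkB (k + 2)) ∧ (∀ x ∈ MW1 k, S x ∈ MW1 k) ∧
    ∀ x ∈ MW2 k, S x = 0}

/-- The rotation `e_{n−1} ∧ e_n`. -/
def Jrot (k : ℕ) : Module.End ℝ (Mink (k + 2)) :=
  wedge (minkB (k + 2)) (emb (Pi.single (⟨k, by omega⟩ : Fin (k + 2)) 1))
    (emb (Pi.single (⟨k + 1, by omega⟩ : Fin (k + 2)) 1))

/-- The algebra `𝔤 = so(1,k+1) ⊕ ℝ·(e_{n−1}∧e_n + a·id)`. -/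
def g16 (k : ℕ) (a : ℝ) : Set (Module.End ℝ (Mink (k + 2))) :=
  {F | ∃ S ∈ so1 k, ∃ c : ℝ,
    F = S + c • (Jrot k + a • (1 : Module.End ℝ (Mink (k + 2))))}

/-! Modulo its first summand, an element of `𝔤 = so({e, f}ᗮ) ⊕ ℝ (e ∧ f + a • id)` is determined by
its coefficient along `e ∧ f + a • id`. For a curvature tensor `R` the coefficients of the values
`R x y` form an alternating form `ω`, and the claim is `ω = 0`. Write `U = {e, f}ᗮ`, which `𝔤`
preserves. The `f`-component of the Bianchi identity on `(u, v, e)` gives `ω u v = 0`, and the two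
components of the identity on `(u, e, f)` form a linear system of determinant `-(1 + a²)` in `ω u e`
and `ω f u`, which hence vanish. What remains of the latter identity is `R e f u = 0` for `u ∈ U`;
but `R e f` acts on `U` as a skew map plus `(a * ω e f) • id`, so `ω e f = 0` because `B` does not
vanish on `U`. -/

section RotationDilation

/-- An orthonormal pair of vectors for a bilinear form, which need not be symmetric: orthogonality
is required on both sides. -/
structure IsOrthonormalPair (B : LinearMap.BilinForm ℝ V) (e f : V) : Prop where
  fst_fst : B e e = 1
  snd_snd : B f f = 1
  fst_snd : B e f = 0
  snd_fst : B f e = 0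

/-- The orthogonal complement `{e, f}ᗮ = {x | B e x = B f x = 0}`, the summand `ℝ^{1,k+1}` in the
Minkowski case. As `B` need not be symmetric, the order of the arguments matters. -/
def pairPerp (B : LinearMap.BilinForm ℝ V) (e f : V) : Submodule ℝ V :=
  B.orthogonal (Submodule.span ℝ {e, f})

/-- The Lie algebra `so({e, f}ᗮ)`, extended by zero to the plane of `e` and `f`: it is encoded as
the space of skew endomorphisms annihilating `e` and `f`. -/
def soPerp (B : LinearMap.BilinForm ℝ V) (e f : V) : Submodule ℝ (Module.End ℝ V) where
  carrier := {S | S ∈ soSet B ∧ S e = 0 ∧ S f = 0}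
  zero_mem' := ⟨fun x y => by simp, rfl, rfl⟩
  add_mem' := by
    rintro S T ⟨hS, hSe, hSf⟩ ⟨hT, hTe, hTf⟩
    refine ⟨fun x y => ?_, by simp [hSe, hTe], by simp [hSf, hTf]⟩
    simp only [LinearMap.add_apply, map_add]
    linear_combination hS x y + hT x y
  smul_mem' := by
    rintro t S ⟨hS, hSe, hSf⟩
    refine ⟨fun x y => ?_, by simp [hSe], by simp [hSf]⟩
    simp only [LinearMap.smul_apply, map_smul, smul_eq_mul]
    linear_combination t * hS x y

/-- The infinitesimal rotation-dilation `e ∧ f + a • id`, which spans the second summand of `𝔤`. -/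
def rotDil (B : LinearMap.BilinForm ℝ V) (e f : V) (a : ℝ) : Module.End ℝ V :=
  wedge B e f + a • 1

/-- The algebra `𝔤 = so({e, f}ᗮ) ⊕ ℝ (e ∧ f + a • id)`, as a space of endomorphisms. -/
def rotDilAlgebra (B : LinearMap.BilinForm ℝ V) (e f : V) (a : ℝ) :
    Submodule ℝ (Module.End ℝ V) :=
  soPerp B e f ⊔ Submodule.span ℝ {rotDil B e f a}

/-- The coefficient along `rotDil B e f a` of an element of `rotDilAlgebra B e f a`, read off as a
matrix entry; it does not involve `a`. -/
def rotCoeff (B : LinearMap.BilinForm ℝ V) (e f : V) : Module.End ℝ V →ₗ[ℝ] ℝ :=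
  B f ∘ₗ LinearMap.applyₗ e

variable {B : LinearMap.BilinForm ℝ V} {e f : V} {a : ℝ} {F : Module.End ℝ V}

lemma rotCoeff_apply : rotCoeff B e f F = B f (F e) := rfl

lemma mem_pairPerp {x : V} : x ∈ pairPerp B e f ↔ B e x = 0 ∧ B f x = 0 := by
  refine ⟨fun hx => ⟨hx e (Submodule.subset_span (by simp)),
    hx f (Submodule.subset_span (by simp))⟩, fun ⟨he, hf⟩ y hy => ?_⟩
  obtain ⟨s, t, rfl⟩ := Submodule.mem_span_pair.1 hy
  simp [he, hf]

lemma rotDil_apply (x : V) :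
    rotDil B e f a x = B e x • f - B f x • e + a • x := rfl

lemma rotDil_apply_of_mem_pairPerp {u : V} (hu : u ∈ pairPerp B e f) :
    rotDil B e f a u = a • u := by
  simp [rotDil_apply, (mem_pairPerp.1 hu).1, (mem_pairPerp.1 hu).2]

lemma soPerp_apply_mem_pairPerp (hF : F ∈ soPerp B e f) (u : V) : F u ∈ pairPerp B e f := by
  obtain ⟨hskew, hFe, hFf⟩ := hF
  exact mem_pairPerp.2 ⟨by simpa [hFe] using hskew e u, by simpa [hFf] using hskew f u⟩

namespace IsOrthonormalPair

variable (h : IsOrthonormalPair B e f)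
include h

lemma exists_eq_add_smul_add_smul (x : V) :
    ∃ u ∈ pairPerp B e f, ∃ s t : ℝ, x = u + s • e + t • f := by
  refine ⟨x - B e x • e - B f x • f, mem_pairPerp.2 ⟨?_, ?_⟩, B e x, B f x, by abel⟩ <;>
    simp [h.fst_fst, h.snd_snd, h.fst_snd, h.snd_fst]

lemma rotDil_apply_fst : rotDil B e f a e = f + a • e := by
  simp [rotDil_apply, h.fst_fst, h.snd_fst]

lemma rotDil_apply_snd : rotDil B e f a f = a • f - e := by
  simp [rotDil_apply, h.fst_snd, h.snd_snd, neg_add_eq_sub]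

lemma rotCoeff_rotDil : rotCoeff B e f (rotDil B e f a) = 1 := by
  simp [rotCoeff_apply, h.rotDil_apply_fst, h.snd_snd, h.snd_fst]

lemma soPerp_lt_rotDilAlgebra : soPerp B e f < rotDilAlgebra B e f a := by
  refine left_lt_sup.2 fun hle => ?_
  have hmem : rotDil B e f a ∈ soPerp B e f := hle (Submodule.mem_span_singleton_self _)
  simpa [rotCoeff_apply, hmem.2.1] using h.rotCoeff_rotDil (a := a)

lemma sub_rotCoeff_smul_mem_soPerp (hF : F ∈ rotDilAlgebra B e f a) :
    F - rotCoeff B e f F • rotDil B e f a ∈ soPerp B e f := by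
  obtain ⟨S, hS, T, hT, rfl⟩ := Submodule.mem_sup.1 hF
  obtain ⟨c, rfl⟩ := Submodule.mem_span_singleton.1 hT
  have hS₀ : rotCoeff B e f S = 0 := by rw [rotCoeff_apply, hS.2.1, map_zero]
  simpa [hS₀, h.rotCoeff_rotDil] using hS

lemma apply_fst (hF : F ∈ rotDilAlgebra B e f a) :
    F e = rotCoeff B e f F • (f + a • e) := by
  have hFe := (h.sub_rotCoeff_smul_mem_soPerp hF).2.1
  rwa [LinearMap.sub_apply, LinearMap.smul_apply, h.rotDil_apply_fst, sub_eq_zero] at hFe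

lemma apply_snd (hF : F ∈ rotDilAlgebra B e f a) :
    F f = rotCoeff B e f F • (a • f - e) := by
  have hFf := (h.sub_rotCoeff_smul_mem_soPerp hF).2.2
  rwa [LinearMap.sub_apply, LinearMap.smul_apply, h.rotDil_apply_snd, sub_eq_zero] at hFf

lemma apply_mem_pairPerp (hF : F ∈ rotDilAlgebra B e f a) {u : V} (hu : u ∈ pairPerp B e f) :
    F u ∈ pairPerp B e f := by
  have hFu := soPerp_apply_mem_pairPerp (h.sub_rotCoeff_smul_mem_soPerp hF) u
  rw [LinearMap.sub_apply, LinearMap.smul_apply, rotDil_apply_of_mem_pairPerp hu] at hFu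
  simpa using add_mem hFu (Submodule.smul_mem _ (rotCoeff B e f F) (Submodule.smul_mem _ a hu))

lemma conformal_on_pairPerp (hF : F ∈ rotDilAlgebra B e f a) {u v : V}
    (hu : u ∈ pairPerp B e f) (hv : v ∈ pairPerp B e f) :
    B (F u) v + B u (F v) = 2 * a * rotCoeff B e f F * B u v := by
  have hskew := (h.sub_rotCoeff_smul_mem_soPerp hF).1 u v
  simp only [LinearMap.sub_apply, LinearMap.smul_apply, rotDil_apply_of_mem_pairPerp hu,
    rotDil_apply_of_mem_pairPerp hv, map_sub, map_smul, smul_eq_mul] at hskew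
  linear_combination hskew

lemma mem_soPerp_of_rotCoeff_eq_zero (hF : F ∈ rotDilAlgebra B e f a)
    (hF₀ : rotCoeff B e f F = 0) : F ∈ soPerp B e f := by
  simpa [hF₀] using h.sub_rotCoeff_smul_mem_soPerp hF

variable {R : V →ₗ[ℝ] V →ₗ[ℝ] Module.End ℝ V} (hR : IsCurv (rotDilAlgebra B e f a) R)
include hR

lemma rotCoeff_curv_perp_perp {u v : V} (hu : u ∈ pairPerp B e f) (hv : v ∈ pairPerp B e f) :
    rotCoeff B e f (R u v) = 0 := by
  obtain ⟨-, hmem, bianchi⟩ := hR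
  have hu' := (mem_pairPerp.1 (h.apply_mem_pairPerp (hmem v e) hu)).2
  have hv' := (mem_pairPerp.1 (h.apply_mem_pairPerp (hmem e u) hv)).2
  simpa [rotCoeff_apply, hu', hv'] using congrArg (B f) (bianchi u v e)

lemma rotCoeff_curv_perp_pair {u : V} (hu : u ∈ pairPerp B e f) :
    rotCoeff B e f (R u e) = 0 ∧ rotCoeff B e f (R f u) = 0 := by
  obtain ⟨-, hmem, bianchi⟩ := hR
  obtain ⟨he, hf⟩ := mem_pairPerp.1 (h.apply_mem_pairPerp (hmem e f) hu)
  have bianchi_uef := bianchi u e f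
  rw [h.apply_snd (hmem u e), h.apply_fst (hmem f u)] at bianchi_uef
  have e_component : -rotCoeff B e f (R u e) + a * rotCoeff B e f (R f u) = 0 := by
    simpa [he, h.fst_fst, h.fst_snd, mul_comm] using congrArg (B e) bianchi_uef
  have f_component : a * rotCoeff B e f (R u e) + rotCoeff B e f (R f u) = 0 := by
    simpa [hf, h.snd_snd, h.snd_fst, mul_comm] using congrArg (B f) bianchi_uef
  have det_ne_zero : 1 + a ^ 2 ≠ 0 := by positivity
  constructor <;> refine (mul_eq_zero.1 ?_).resolve_left det_ne_zero
  · linear_combination a * f_component - e_component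
  · linear_combination a * e_component + f_component

lemma curv_pair_apply_perp {u : V} (hu : u ∈ pairPerp B e f) : R e f u = 0 := by
  obtain ⟨hue, hfu⟩ := h.rotCoeff_curv_perp_pair hR hu
  obtain ⟨-, hmem, bianchi⟩ := hR
  simpa [h.apply_fst (hmem f u), h.apply_snd (hmem u e), hue, hfu] using bianchi e f u

lemma rotCoeff_curv_pair (ha : a ≠ 0)
    (hB : ∃ u ∈ pairPerp B e f, ∃ v ∈ pairPerp B e f, B u v ≠ 0) :
    rotCoeff B e f (R e f) = 0 := by
  obtain ⟨u, hu, v, hv, huv⟩ := hB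
  simpa [h.curv_pair_apply_perp hR hu, h.curv_pair_apply_perp hR hv, ha, huv] using
    h.conformal_on_pairPerp (hR.2.1 e f) hu hv

lemma rotCoeff_curv (ha : a ≠ 0)
    (hB : ∃ u ∈ pairPerp B e f, ∃ v ∈ pairPerp B e f, B u v ≠ 0) (x y : V) :
    rotCoeff B e f (R x y) = 0 := by
  have swap : ∀ x y, rotCoeff B e f (R x y) = -rotCoeff B e f (R y x) := fun x y => by
    rw [hR.1 x y, map_neg]
  have self : ∀ x, rotCoeff B e f (R x x) = 0 := fun x => self_eq_neg.1 (swap x x)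
  obtain ⟨u, hu, s, t, rfl⟩ := h.exists_eq_add_smul_add_smul x
  obtain ⟨v, hv, s', t', rfl⟩ := h.exists_eq_add_smul_add_smul y
  obtain ⟨hue, hfu⟩ := h.rotCoeff_curv_perp_pair hR hu
  obtain ⟨hve, hfv⟩ := h.rotCoeff_curv_perp_pair hR hv
  have hef := h.rotCoeff_curv_pair hR ha hB
  simp [h.rotCoeff_curv_perp_perp hR hu hv, hue, hfv, hef, self, swap u f, hfu, swap e v, hve,
    swap f e]

end IsOrthonormalPair

theorem rotation_plus_id_not_Berger_general (h : IsOrthonormalPair B e f)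
    (hB : ∃ u ∈ pairPerp B e f, ∃ v ∈ pairPerp B e f, B u v ≠ 0) (ha : a ≠ 0) :
    (∀ R, IsCurv (rotDilAlgebra B e f a) R → ∀ x y, R x y ∈ soPerp B e f) ∧
    curvSpan (rotDilAlgebra B e f a : Set (Module.End ℝ V)) ≤ soPerp B e f ∧
    soPerp B e f < rotDilAlgebra B e f a ∧
    ¬ IsBerger (rotDilAlgebra B e f a : Set (Module.End ℝ V)) := by
  have values_mem : ∀ R, IsCurv (rotDilAlgebra B e f a) R → ∀ x y, R x y ∈ soPerp B e f :=
    fun R hR x y => h.mem_soPerp_of_rotCoeff_eq_zero (hR.2.1 x y) (h.rotCoeff_curv hR ha hB x y)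
  have span_le : curvSpan (rotDilAlgebra B e f a : Set (Module.End ℝ V)) ≤ soPerp B e f := by
    refine Submodule.span_le.2 ?_
    rintro _ ⟨R, hR, x, y, rfl⟩
    exact values_mem R hR x y
  have proper : soPerp B e f < rotDilAlgebra B e f a := h.soPerp_lt_rotDilAlgebra
  exact ⟨values_mem, span_le, proper,
    fun hBerger => (span_le.trans_lt proper).ne (SetLike.coe_injective hBerger)⟩

end RotationDilation

section Minkowski

variable (k : ℕ)

/-- The unit vector `e_{n-1}` of `ℝ^{1,n+1}`, `n = k+2`; its index in `Fin (k + 2)` is `k`. -/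
def planeFst : Mink (k + 2) := emb (Pi.single (Fin.last k).castSucc 1)

/-- The unit vector `e_n` of `ℝ^{1,n+1}`, `n = k+2`; its index in `Fin (k + 2)` is `k + 1`. -/
def planeSnd : Mink (k + 2) := emb (Pi.single (Fin.last (k + 1)) 1)

lemma minkB_emb_single {n : ℕ} (i : Fin n) (X : Mink n) :
    minkB n (emb (Pi.single i 1)) X = X.2.1 i := by
  simp [minkB, dotE, emb, Pi.single_apply]

lemma isOrthonormalPair_plane : IsOrthonormalPair (minkB (k + 2)) (planeFst k) (planeSnd k) := by
  constructor <;> simp only [planeFst, planeSnd, minkB_emb_single] <;> simp [emb]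

variable {k} in
lemma lt_or_eq_castSucc_last_or_eq_last (i : Fin (k + 2)) :
    (i : ℕ) < k ∨ i = (Fin.last k).castSucc ∨ i = Fin.last (k + 1) := by
  simp only [Fin.ext_iff, Fin.val_castSucc, Fin.val_last]
  omega

lemma MW1_eq_pairPerp : MW1 k = pairPerp (minkB (k + 2)) (planeFst k) (planeSnd k) := by
  ext w
  rw [mem_pairPerp, planeFst, planeSnd, minkB_emb_single, minkB_emb_single]
  refine ⟨fun hw => ⟨hw _ le_rfl, hw _ (Nat.le_succ k)⟩, fun ⟨hfst, hsnd⟩ i hi => ?_⟩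
  obtain hik | rfl | rfl := lt_or_eq_castSucc_last_or_eq_last i
  exacts [absurd hi hik.not_ge, hfst, hsnd]

lemma MW2_eq_span_plane : MW2 k = Submodule.span ℝ {planeFst k, planeSnd k} := by
  apply le_antisymm
  · rintro w ⟨hp, hq, hw⟩
    refine Submodule.mem_span_pair.2
      ⟨w.2.1 (Fin.last k).castSucc, w.2.1 (Fin.last (k + 1)), ?_⟩
    ext i
    · simp [planeFst, planeSnd, emb, hp]
    · obtain hi | rfl | rfl := lt_or_eq_castSucc_last_or_eq_last i
      · simp [planeFst, planeSnd, emb, Fin.ext_iff, hw i hi, hi.ne,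
          (hi.trans k.lt_succ_self).ne]
      · simp [planeFst, planeSnd, emb]
      · simp [planeFst, planeSnd, emb]
    · simp [planeFst, planeSnd, emb, hq]
  · rw [Submodule.span_le, Set.pair_subset_iff]
    constructor <;> refine ⟨rfl, rfl, fun i hi => Pi.single_eq_of_ne (Fin.ne_of_val_ne ?_) _⟩
    exacts [hi.ne, (hi.trans k.lt_succ_self).ne]

lemma so1_eq_soPerp :
    so1 k = (soPerp (minkB (k + 2)) (planeFst k) (planeSnd k) : Set (Module.End ℝ _)) := by
  ext S
  rw [so1, MW1_eq_pairPerp, MW2_eq_span_plane]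
  constructor
  · rintro ⟨hskew, -, hzero⟩
    exact ⟨hskew, hzero _ (Submodule.subset_span (by simp)),
      hzero _ (Submodule.subset_span (by simp))⟩
  · intro hS
    refine ⟨hS.1, fun x _ => soPerp_apply_mem_pairPerp hS x, fun x hx => ?_⟩
    obtain ⟨s, t, rfl⟩ := Submodule.mem_span_pair.1 hx
    simp [hS.2.1, hS.2.2]

lemma g16_eq_rotDilAlgebra (a : ℝ) :
    g16 k a = rotDilAlgebra (minkB (k + 2)) (planeFst k) (planeSnd k) a := by
  ext F
  simp only [g16, so1_eq_soPerp, rotDilAlgebra, SetLike.mem_coe, Submodule.mem_sup,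
    Submodule.mem_span_singleton, exists_exists_eq_and, Set.mem_ofPred_eq, eq_comm (a := F)]
  rfl

lemma exists_minkB_ne_zero_on_pairPerp :
    ∃ u ∈ pairPerp (minkB (k + 2)) (planeFst k) (planeSnd k),
      ∃ v ∈ pairPerp (minkB (k + 2)) (planeFst k) (planeSnd k), minkB (k + 2) u v ≠ 0 := by
  rw [← MW1_eq_pairPerp]
  exact ⟨pvec (k + 2), fun _ _ => rfl, qvec (k + 2), fun _ _ => rfl, by simp [minkB, pvec, qvec]⟩

end Minkowski

/-- For `k ≥ 1`, `n = k+2`, and `a ≠ 0`, every algebraic curvature tensor of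
type `𝔤 = so(1,k+1) ⊕ ℝ·(e_{n−1}∧e_n + a·id)` takes values in `so(1,k+1)`;
in particular `L(ℛ(𝔤)) ⊆ so(1,k+1) ⊊ 𝔤` and `𝔤` is not a Berger algebra. -/
theorem rotation_plus_id_not_Berger (k : ℕ) (hk : 1 ≤ k) (a : ℝ) (ha : a ≠ 0) :
    (∀ R, IsCurv (g16 k a) R → ∀ x y, R x y ∈ so1 k) ∧
    (curvSpan (g16 k a) : Set (Module.End ℝ (Mink (k + 2)))) ⊆ so1 k ∧
    so1 k ⊆ g16 k a ∧ so1 k ≠ g16 k a ∧ ¬ IsBerger (g16 k a) := by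
  obtain ⟨values_mem, span_le, proper, not_Berger⟩ := rotation_plus_id_not_Berger_general
    (isOrthonormalPair_plane k) (exists_minkB_ne_zero_on_pairPerp k) ha
  rw [so1_eq_soPerp, g16_eq_rotDilAlgebra]
  exact ⟨values_mem, span_le, proper.le, SetLike.coe_injective.ne proper.ne, not_Berger⟩

end Weyl
end
end
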